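/- arXiv:1706.08550 — 12 statements merged into one kernel-verified Lean document; each statement's English description precedes it below -/
import Mathlib

section
/- Let A, B be m×n real matrices and let M' be an SDP1-feasible solution for the game (A,B). If M' has rank 1, then the pair (x,y) appearing in the last column of M' is a Nash equilibrium of the game (A,B). -/
open Matrix BigOperators

/-- Index type for the `(m+n+1)×(m+n+1)` SDP matrix: `m` row-player strategies,
`n` column-player strategies, plus one extra index for the last row/column. -/
abbrev SDPIdx (m n : ℕ) := (Fin m ⊕ Fin n) ⊕ Unit

variable {m n : ℕ}

/-- The vector `x` appearing in the last column of the SDP matrix. -/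
def lastX (M : Matrix (SDPIdx m n) (SDPIdx m n) ℝ) (i : Fin m) : ℝ :=
  M (Sum.inl (Sum.inl i)) (Sum.inr ())

/-- The vector `y` appearing in the last column of the SDP matrix. -/
def lastY (M : Matrix (SDPIdx m n) (SDPIdx m n) ℝ) (j : Fin n) : ℝ :=
  M (Sum.inl (Sum.inr j)) (Sum.inr ())

/-- The `m × m` block `X`. -/
def blkX (M : Matrix (SDPIdx m n) (SDPIdx m n) ℝ) (i i' : Fin m) : ℝ :=
  M (Sum.inl (Sum.inl i)) (Sum.inl (Sum.inl i'))

/-- The `n × n` block `Y`. -/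
def blkY (M : Matrix (SDPIdx m n) (SDPIdx m n) ℝ) (j j' : Fin n) : ℝ :=
  M (Sum.inl (Sum.inr j)) (Sum.inl (Sum.inr j'))

/-- The `m × n` block `P = Zᵀ`. -/
def blkP (M : Matrix (SDPIdx m n) (SDPIdx m n) ℝ) (i : Fin m) (j : Fin n) : ℝ :=
  M (Sum.inl (Sum.inl i)) (Sum.inl (Sum.inr j))

/-- The `n × m` block `Z`. -/
def blkZ (M : Matrix (SDPIdx m n) (SDPIdx m n) ℝ) (j : Fin n) (i : Fin m) : ℝ :=
  M (Sum.inl (Sum.inr j)) (Sum.inl (Sum.inl i))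

/-- The upper-left `(m+n)×(m+n)` block `M = [[X, P],[Z, Y]]` of the SDP matrix. -/
def upperBlock (M : Matrix (SDPIdx m n) (SDPIdx m n) ℝ) :
    Matrix (Fin m ⊕ Fin n) (Fin m ⊕ Fin n) ℝ :=
  Matrix.of fun a b => M (Sum.inl a) (Sum.inl b)

/-- Membership in the standard simplex `Δ_k`. -/
def InSimplex {k : ℕ} (x : Fin k → ℝ) : Prop :=
  (∀ i, 0 ≤ x i) ∧ ∑ i, x i = 1

/-- `(x,y)` is a Nash equilibrium of the bimatrix game `(A,B)`:
`x ∈ Δ_m`, `y ∈ Δ_n`, `xᵀAy ≥ (Ay)_i` for all `i`, and `xᵀBy ≥ (Bᵀx)_j` for all `j`. -/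
def IsNash (A B : Matrix (Fin m) (Fin n) ℝ) (x : Fin m → ℝ) (y : Fin n → ℝ) : Prop :=
  InSimplex x ∧ InSimplex y ∧
  (∀ i : Fin m, ∑ i', ∑ j, x i' * A i' j * y j ≥ ∑ j, A i j * y j) ∧
  (∀ j : Fin n, ∑ i, ∑ j', x i * B i j' * y j' ≥ ∑ i, B i j * x i)

/-- Feasibility for SDP1: `M'` is psd, entrywise nonnegative, has `1` in the corner,
`x` and `y` sum to one, and the relaxed Nash constraints
`Tr(AZ) ≥ (Ay)_i` and `Tr(BZ) ≥ (Bᵀx)_j` hold. -/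
def SDP1Feasible (A B : Matrix (Fin m) (Fin n) ℝ)
    (M : Matrix (SDPIdx m n) (SDPIdx m n) ℝ) : Prop :=
  M.PosSemidef ∧
  (∀ a b, 0 ≤ M a b) ∧
  M (Sum.inr ()) (Sum.inr ()) = 1 ∧
  (∑ i, lastX M i) = 1 ∧
  (∑ j, lastY M j) = 1 ∧
  (∀ i : Fin m, ∑ i', ∑ j, A i' j * blkZ M j i' ≥ ∑ j, A i j * lastY M j) ∧
  (∀ j : Fin n, ∑ i, ∑ j', B i j' * blkZ M j' i ≥ ∑ i, B i j * lastX M i)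

/-- Feasibility for SDP2: SDP1 feasibility together with the row constraints and the
correlated equilibrium constraints. -/
def SDP2Feasible (A B : Matrix (Fin m) (Fin n) ℝ)
    (M : Matrix (SDPIdx m n) (SDPIdx m n) ℝ) : Prop :=
  SDP1Feasible A B M ∧
  (∀ i : Fin m, ∑ j, blkX M i j = lastX M i) ∧
  (∀ i : Fin m, ∑ j, blkP M i j = lastX M i) ∧
  (∀ j : Fin n, ∑ j', blkY M j j' = lastY M j) ∧
  (∀ j : Fin n, ∑ i, blkZ M j i = lastY M j) ∧
  (∀ i k : Fin m, ∑ j, A i j * blkP M i j ≥ ∑ j, A k j * blkP M i j) ∧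
  (∀ j k : Fin n, ∑ i, B i j * blkP M i j ≥ ∑ i, B i k * blkP M i j)

/-- `ε_A(x,y) = max_i (Ay)_i − xᵀAy`. -/
noncomputable def epsA (A : Matrix (Fin m) (Fin n) ℝ) (x : Fin m → ℝ) (y : Fin n → ℝ) : ℝ :=
  (⨆ i : Fin m, ∑ j, A i j * y j) - ∑ i, ∑ j, x i * A i j * y j

/-- `ε_B(x,y) = max_j (Bᵀx)_j − xᵀBy`. -/
noncomputable def epsB (B : Matrix (Fin m) (Fin n) ℝ) (x : Fin m → ℝ) (y : Fin n → ℝ) : ℝ :=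
  (⨆ j : Fin n, ∑ i, B i j * x i) - ∑ i, ∑ j, x i * B i j * y j

/-- `ε(x,y) = max{ε_A(x,y), ε_B(x,y)}`. -/
noncomputable def epsNE (A B : Matrix (Fin m) (Fin n) ℝ) (x : Fin m → ℝ) (y : Fin n → ℝ) : ℝ :=
  max (epsA A x y) (epsB B x y)

/-- The `m × n` all-ones matrix `J`. -/
def allOnesM (m n : ℕ) : Matrix (Fin m) (Fin n) ℝ :=
  Matrix.of fun _ _ => (1 : ℝ)

section RankOne

variable {ι κ K : Type*} [Fintype κ] [Field K] {M : Matrix ι κ K}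

theorem exists_eq_vecMulVec_of_rank_le_one (hM : M.rank ≤ 1) :
    ∃ (u : ι → K) (v : κ → K), M = vecMulVec u v := by
  have := Module.Finite.span_of_finite K (Set.finite_range M.col)
  rw [rank_eq_finrank_span_cols, Submodule.finrank_le_one_iff_isPrincipal] at hM
  obtain ⟨u, hu⟩ := hM
  have col_mem (b : κ) : M.col b ∈ Submodule.span K {u} :=
    hu ▸ Submodule.subset_span (Set.mem_range_self b)
  choose v hv using fun b => Submodule.mem_span_singleton.mp (col_mem b)
  refine ⟨u, v, Matrix.ext fun a b => ?_⟩
  calc M a b = v b * u a := (congrFun (hv b) a).symm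
    _ = vecMulVec u v a b := mul_comm _ _

theorem smul_eq_vecMulVec_col_row_of_rank_le_one (hM : M.rank ≤ 1) (i : ι) (j : κ) :
    M i j • M = vecMulVec (M.col j) (M.row i) := by
  obtain ⟨u, v, rfl⟩ := exists_eq_vecMulVec_of_rank_le_one hM
  ext a b
  simp only [Matrix.smul_apply, smul_eq_mul, vecMulVec_apply, col_apply, row_apply]
  ring

end RankOne

theorem eq_vecMulVec_col_self_of_isSymm_of_rank_le_one {ι K : Type*} [Fintype ι] [Field K]
    {M : Matrix ι ι K} (hsymm : M.IsSymm) (hM : M.rank ≤ 1) {k : ι} (hk : M k k = 1) :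
    M = vecMulVec (M.col k) (M.col k) := by
  have row_eq_col : M.row k = M.col k := funext fun b => hsymm.apply b k
  simpa only [hk, one_smul, row_eq_col] using smul_eq_vecMulVec_col_row_of_rank_le_one hM k k

section SDP

variable {M : Matrix (SDPIdx m n) (SDPIdx m n) ℝ}

theorem blkZ_eq_lastY_mul_lastX (hsymm : M.IsSymm) (hM : M.rank ≤ 1)
    (hcorner : M (Sum.inr ()) (Sum.inr ()) = 1) (j : Fin n) (i : Fin m) :
    blkZ M j i = lastY M j * lastX M i :=
  congrFun₂ (eq_vecMulVec_col_self_of_isSymm_of_rank_le_one hsymm hM hcorner) _ _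

theorem sum_mul_blkZ_eq_sum_mul_mul (hZ : ∀ j i, blkZ M j i = lastY M j * lastX M i)
    (C : Matrix (Fin m) (Fin n) ℝ) :
    ∑ i, ∑ j, C i j * blkZ M j i = ∑ i, ∑ j, lastX M i * C i j * lastY M j := by
  refine Finset.sum_congr rfl fun i _ => Finset.sum_congr rfl fun j _ => ?_
  rw [hZ]
  ring

theorem SDP1Feasible.isNash {A B : Matrix (Fin m) (Fin n) ℝ} (hfeas : SDP1Feasible A B M)
    (hZ : ∀ j i, blkZ M j i = lastY M j * lastX M i) : IsNash A B (lastX M) (lastY M) := by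
  obtain ⟨-, hnonneg, -, sum_x, sum_y, hA, hB⟩ := hfeas
  rw [sum_mul_blkZ_eq_sum_mul_mul hZ] at hA hB
  exact ⟨⟨fun _ => hnonneg _ _, sum_x⟩, ⟨fun _ => hnonneg _ _, sum_y⟩, hA, hB⟩

end SDP

/-- A rank-1 SDP1-feasible solution yields a Nash equilibrium in its last column. -/
theorem stmt0 (A B : Matrix (Fin m) (Fin n) ℝ)
    (M : Matrix (SDPIdx m n) (SDPIdx m n) ℝ)
    (hfeas : SDP1Feasible A B M) (hrank : M.rank = 1) :
    IsNash A B (lastX M) (lastY M) := by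
  have hsymm : M.IsSymm := isHermitian_iff_isSymm.mp hfeas.1.isHermitian
  have hcorner : M (Sum.inr ()) (Sum.inr ()) = 1 := hfeas.2.2.1
  exact hfeas.isNash (blkZ_eq_lastY_mul_lastX hsymm hrank.le hcorner)
end

section
/- Let A, B be m×n real matrices all of whose entries lie in the interval [0,1]. Then for any x ∈ Δ_m and y ∈ Δ_n, there exists an SDP1-feasible solution M' for the game (A,B) whose last column equals (x, y, 1). -/
open Matrix BigOperators

variable {m n : ℕ}

/- With `v = (x, y, 1)` and `w = (1, …, 1, 0)`, the matrix `v vᵀ + w wᵀ` is positive semidefinite,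
entrywise nonnegative, and has last column `v` because `w` vanishes in its last coordinate. Its
block `Z = y xᵀ + J` has all entries at least `1`, hence dominates every `x_i` and `y_j`. For
nonnegative payoffs, a single diagonal entry `(AZ)_ii ≥ (Ay)_i` or `(ZB)_jj ≥ (Bᵀx)_j` therefore
already makes the traces `Tr(AZ)` and `Tr(BZ) = Tr(ZB)` large enough. -/

section Payoff

variable {ι κ R : Type*} [Fintype ι] [Fintype κ]

lemma mulVec_apply_le_trace_mul [Semiring R] [PartialOrder R] [IsOrderedRing R]
    {A : Matrix ι κ R} {Z : Matrix κ ι R} (hA : ∀ i j, 0 ≤ A i j) (hZ : ∀ j i, 0 ≤ Z j i)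
    {y : κ → R} {i : ι} (hy : ∀ j, y j ≤ Z j i) : (A *ᵥ y) i ≤ (A * Z).trace := by
  have diag_nonneg : ∀ k, 0 ≤ (A * Z) k k := fun k =>
    Finset.sum_nonneg fun j _ => mul_nonneg (hA k j) (hZ j k)
  calc (A *ᵥ y) i ≤ (A * Z) i i :=
        Finset.sum_le_sum fun j _ => mul_le_mul_of_nonneg_left (hy j) (hA i j)
    _ ≤ (A * Z).trace :=
        Finset.single_le_sum (f := (A * Z).diag) (fun k _ => diag_nonneg k) (Finset.mem_univ i)

lemma transpose_mulVec_apply_le_trace_mul [CommSemiring R] [PartialOrder R] [IsOrderedRing R]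
    {B : Matrix ι κ R} {Z : Matrix κ ι R} (hB : ∀ i j, 0 ≤ B i j) (hZ : ∀ j i, 0 ≤ Z j i)
    {x : ι → R} {j : κ} (hx : ∀ i, x i ≤ Z j i) : (Bᵀ *ᵥ x) j ≤ (B * Z).trace := by
  rw [trace_mul_comm, ← trace_transpose, transpose_mul]
  exact mulVec_apply_le_trace_mul (fun j i => hB i j) (fun i j => hZ j i) hx

end Payoff

lemma InSimplex.le_one {k : ℕ} {x : Fin k → ℝ} (hx : InSimplex x) (i : Fin k) : x i ≤ 1 :=
  (mem_Icc_of_mem_stdSimplex hx i).2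

/-- The last column `(x, y, 1)` prescribed for an SDP matrix. -/
def lastColumn (x : Fin m → ℝ) (y : Fin n → ℝ) : SDPIdx m n → ℝ :=
  Sum.elim (Sum.elim x y) 1

/-- The vector `(1, …, 1, 0)`, the indicator of the strategies of both players among the SDP
indices. -/
def strategyIndicator (m n : ℕ) : SDPIdx m n → ℝ :=
  Sum.elim 1 0

/-- The matrix `v vᵀ + w wᵀ` with `v = (x, y, 1)` and `w = (1, …, 1, 0)`, used as an SDP1-feasible
solution with last column `(x, y, 1)`. -/
def sdpLift (x : Fin m → ℝ) (y : Fin n → ℝ) : Matrix (SDPIdx m n) (SDPIdx m n) ℝ :=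
  vecMulVec (lastColumn x y) (lastColumn x y) +
    vecMulVec (strategyIndicator m n) (strategyIndicator m n)

section SDPLift

variable (x : Fin m → ℝ) (y : Fin n → ℝ)

lemma sdpLift_corner : sdpLift x y (Sum.inr ()) (Sum.inr ()) = 1 := by
  simp [sdpLift, vecMulVec_apply, lastColumn, strategyIndicator]

lemma lastX_sdpLift : lastX (sdpLift x y) = x := by
  ext i
  simp [lastX, sdpLift, vecMulVec_apply, lastColumn, strategyIndicator]

lemma lastY_sdpLift : lastY (sdpLift x y) = y := by
  ext j
  simp [lastY, sdpLift, vecMulVec_apply, lastColumn, strategyIndicator]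

lemma blkZ_sdpLift (j : Fin n) (i : Fin m) : blkZ (sdpLift x y) j i = y j * x i + 1 := by
  simp [blkZ, sdpLift, vecMulVec_apply, lastColumn, strategyIndicator]

lemma posSemidef_sdpLift : (sdpLift x y).PosSemidef :=
  (posSemidef_vecMulVec_self_star (lastColumn x y)).add
    (posSemidef_vecMulVec_self_star (strategyIndicator m n))

variable {x y}

lemma lastColumn_nonneg (hx : ∀ i, 0 ≤ x i) (hy : ∀ j, 0 ≤ y j) : ∀ a, 0 ≤ lastColumn x y a
  | .inl (.inl i) => hx i
  | .inl (.inr j) => hy j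
  | .inr _ => zero_le_one

lemma sdpLift_nonneg (hx : ∀ i, 0 ≤ x i) (hy : ∀ j, 0 ≤ y j) (a b : SDPIdx m n) :
    0 ≤ sdpLift x y a b := by
  have indicator_nonneg : ∀ c, 0 ≤ strategyIndicator m n c :=
    Sum.rec (fun _ => zero_le_one) fun _ => le_rfl
  exact add_nonneg
    (mul_nonneg (lastColumn_nonneg hx hy a) (lastColumn_nonneg hx hy b))
    (mul_nonneg (indicator_nonneg a) (indicator_nonneg b))

lemma one_le_blkZ_sdpLift (hx : ∀ i, 0 ≤ x i) (hy : ∀ j, 0 ≤ y j) (j : Fin n) (i : Fin m) :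
    1 ≤ blkZ (sdpLift x y) j i := by
  rw [blkZ_sdpLift]
  exact le_add_of_nonneg_left (mul_nonneg (hy j) (hx i))

end SDPLift

theorem stmt1_general (A B : Matrix (Fin m) (Fin n) ℝ)
    (hA : ∀ i j, 0 ≤ A i j) (hB : ∀ i j, 0 ≤ B i j)
    (x : Fin m → ℝ) (y : Fin n → ℝ) (hx : InSimplex x) (hy : InSimplex y) :
    ∃ M : Matrix (SDPIdx m n) (SDPIdx m n) ℝ,
      SDP1Feasible A B M ∧ lastX M = x ∧ lastY M = y := by
  have lift_nonneg := sdpLift_nonneg hx.1 hy.1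
  have one_le_Z := one_le_blkZ_sdpLift hx.1 hy.1
  have Z_nonneg : ∀ j i, 0 ≤ blkZ (sdpLift x y) j i := fun j i => lift_nonneg _ _
  refine ⟨sdpLift x y, ⟨posSemidef_sdpLift x y, lift_nonneg, sdpLift_corner x y, ?_, ?_, ?_, ?_⟩,
    lastX_sdpLift x y, lastY_sdpLift x y⟩
  · rw [lastX_sdpLift, hx.2]
  · rw [lastY_sdpLift, hy.2]
  · intro i
    rw [lastY_sdpLift]
    exact mulVec_apply_le_trace_mul hA Z_nonneg fun j => (hy.le_one j).trans (one_le_Z j i)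
  · intro j
    rw [lastX_sdpLift]
    exact transpose_mulVec_apply_le_trace_mul hB Z_nonneg
      fun i => (hx.le_one i).trans (one_le_Z j i)

/-- For payoff matrices with entries in `[0,1]`, every simplex pair `(x,y)`
appears as the last column of some SDP1-feasible solution. -/
theorem stmt1 (A B : Matrix (Fin m) (Fin n) ℝ)
    (hA : ∀ i j, A i j ∈ Set.Icc (0 : ℝ) 1) (hB : ∀ i j, B i j ∈ Set.Icc (0 : ℝ) 1)
    (x : Fin m → ℝ) (y : Fin n → ℝ) (hx : InSimplex x) (hy : InSimplex y) :
    ∃ M : Matrix (SDPIdx m n) (SDPIdx m n) ℝ,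
      SDP1Feasible A B M ∧ lastX M = x ∧ lastY M = y :=
  stmt1_general A B (fun i j => (hA i j).1) (fun i j => (hB i j).1) x y hx hy
end

section
/- Let A, B be m×n real matrices and let M' be an SDP1-feasible solution for the game (A,B) of rank 1, with blocks X, Y, P = Z^T and last-column vectors x, y. Then M' satisfies the row inequalities Σ_{j=1}^m X_{ij} = x_i and Σ_{j=1}^n P_{ij} = x_i for all i ∈ {1,…,m}, and Σ_{j=1}^n Y_{ij} = y_i and Σ_{j=1}^m Z_{ij} = y_i for all i ∈ {1,…,n}; and it satisfies the correlated equilibrium inequalities Σ_{j=1}^n A_{ij} P_{ij} ≥ Σ_{j=1}^n A_{kj} P_{ij} for all i,k ∈ {1,…,m} and Σ_{j=1}^m B_{ji} P_{ji} ≥ Σ_{j=1}^m B_{jk} P_{ji} for all i,k ∈ {1,…,n}. -/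
open Matrix BigOperators

variable {m n : ℕ}

/-!
Rank one kills every `2 × 2` minor, and the corner entry of `M` is `1`, so the symmetric matrix `M`
is the outer product of its last column `(x, y, 1)` with itself. The row sums follow because `x` and
`y` sum to one, and the relaxed Nash constraints become the honest ones, so `(x, y)` is a Nash
equilibrium. Every pure strategy in the support of an equilibrium strategy is a best response
(complementary slackness); multiplied by the weight of that strategy, this is the correlated
equilibrium inequality for the product distribution `P i j = x i * y j`.
-/

section Minors

variable {ι κ μ R : Type*} [Fintype κ] [CommRing R] [IsDomain R]

theorem det_submatrix_eq_zero_of_rank_lt_card [Fintype μ] [DecidableEq μ] {M : Matrix ι κ R}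
    (hM : M.rank < Fintype.card μ) (r : μ → ι) (c : μ → κ) : (M.submatrix r c).det = 0 := by
  by_contra hdet
  exact hM.not_ge (rank_of_det_ne_zero hdet ▸ rank_submatrix_le M r c)

theorem mul_apply_eq_mul_apply_of_rank_le_one {M : Matrix ι κ R} (hM : M.rank ≤ 1)
    (i k : ι) (j l : κ) : M i j * M k l = M i l * M k j := by
  have hdet : (M.submatrix ![i, k] ![j, l]).det = 0 :=
    det_submatrix_eq_zero_of_rank_lt_card (by simpa using Nat.lt_succ_of_le hM) _ _
  rw [det_fin_two] at hdet
  exact sub_eq_zero.1 hdet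

end Minors

theorem mul_eq_mul_dotProduct_of_forall_le {ι R : Type*} [Fintype ι] [Ring R] [PartialOrder R]
    [IsOrderedRing R] {w f : ι → R} (hw : w ∈ stdSimplex R ι) (hf : ∀ i, f i ≤ w ⬝ᵥ f) (i : ι) :
    w i * f i = w i * (w ⬝ᵥ f) := by
  have hle : ∀ k ∈ Finset.univ, w k * f k ≤ w k * (w ⬝ᵥ f) :=
    fun k _ => mul_le_mul_of_nonneg_left (hf k) (hw.1 k)
  have hsum : ∑ k, w k * f k = ∑ k, w k * (w ⬝ᵥ f) := by
    rw [← Finset.sum_mul, hw.2, one_mul, dotProduct]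
  exact (Finset.sum_eq_sum_iff_of_le hle).1 hsum i (Finset.mem_univ i)

namespace IsNash

variable {A B : Matrix (Fin m) (Fin n) ℝ} {x : Fin m → ℝ} {y : Fin n → ℝ}

theorem transpose (h : IsNash A B x y) : IsNash Bᵀ Aᵀ y x := by
  obtain ⟨hx, hy, hA, hB⟩ := h
  have swap (C : Matrix (Fin m) (Fin n) ℝ) :
      ∑ j, ∑ i, y j * Cᵀ j i * x i = ∑ i, ∑ j, x i * C i j * y j := by
    rw [Finset.sum_comm]
    simp only [transpose_apply, mul_comm, mul_left_comm]
  exact ⟨hy, hx, fun j => (swap B).symm ▸ hB j, fun i => (swap A).symm ▸ hA i⟩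

theorem mul_mulVec_le (h : IsNash A B x y) (i k : Fin m) :
    x i * (A *ᵥ y) k ≤ x i * (A *ᵥ y) i := by
  obtain ⟨hx, -, hA, -⟩ := h
  have hbest (l : Fin m) : (A *ᵥ y) l ≤ x ⬝ᵥ A *ᵥ y := by
    simpa only [dotProduct, mulVec, Finset.mul_sum, mul_assoc] using hA l
  calc
    x i * (A *ᵥ y) k ≤ x i * (x ⬝ᵥ A *ᵥ y) := mul_le_mul_of_nonneg_left (hbest k) (hx.1 i)
    _ = x i * (A *ᵥ y) i := (mul_eq_mul_dotProduct_of_forall_le hx hbest i).symm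

theorem sum_mul_le_sum_mul (h : IsNash A B x y) (i k : Fin m) :
    ∑ j, A k j * (x i * y j) ≤ ∑ j, A i j * (x i * y j) := by
  simpa only [mulVec, dotProduct, Finset.mul_sum, mul_left_comm] using h.mul_mulVec_le i k

end IsNash

namespace SDP1Feasible

variable {A B : Matrix (Fin m) (Fin n) ℝ} {M : Matrix (SDPIdx m n) (SDPIdx m n) ℝ}

theorem apply_eq_mul_of_rank_le_one (h : SDP1Feasible A B M) (hM : M.rank ≤ 1)
    (a b : SDPIdx m n) : M a b = M a (Sum.inr ()) * M b (Sum.inr ()) := by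
  obtain ⟨hpsd, -, hcorner, -⟩ := h
  have hsymm : M (Sum.inr ()) b = M b (Sum.inr ()) := hpsd.isHermitian.apply b (Sum.inr ())
  simpa only [hcorner, mul_one, hsymm] using
    mul_apply_eq_mul_apply_of_rank_le_one hM a (Sum.inr ()) b (Sum.inr ())

theorem isNash_of_rank_le_one (h : SDP1Feasible A B M) (hM : M.rank ≤ 1) :
    IsNash A B (lastX M) (lastY M) := by
  have hZ (j : Fin n) (i : Fin m) : blkZ M j i = lastY M j * lastX M i :=
    h.apply_eq_mul_of_rank_le_one hM _ _
  have htrace (C : Matrix (Fin m) (Fin n) ℝ) :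
      ∑ i, ∑ j, C i j * blkZ M j i = ∑ i, ∑ j, lastX M i * C i j * lastY M j := by
    simp only [hZ, mul_comm, mul_left_comm]
  obtain ⟨-, hnonneg, -, hx, hy, hA, hB⟩ := h
  exact ⟨⟨fun _ => hnonneg _ _, hx⟩, ⟨fun _ => hnonneg _ _, hy⟩,
    fun i => htrace A ▸ hA i, fun j => htrace B ▸ hB j⟩

end SDP1Feasible

/-- A rank-1 SDP1-feasible solution satisfies the row inequalities and the
correlated equilibrium inequalities. -/
theorem stmt2 (A B : Matrix (Fin m) (Fin n) ℝ)
    (M : Matrix (SDPIdx m n) (SDPIdx m n) ℝ)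
    (hfeas : SDP1Feasible A B M) (hrank : M.rank = 1) :
    (∀ i : Fin m, ∑ j, blkX M i j = lastX M i) ∧
    (∀ i : Fin m, ∑ j, blkP M i j = lastX M i) ∧
    (∀ j : Fin n, ∑ j', blkY M j j' = lastY M j) ∧
    (∀ j : Fin n, ∑ i, blkZ M j i = lastY M j) ∧
    (∀ i k : Fin m, ∑ j, A i j * blkP M i j ≥ ∑ j, A k j * blkP M i j) ∧
    (∀ j k : Fin n, ∑ i, B i j * blkP M i j ≥ ∑ i, B i k * blkP M i j) := by
  have hM := hfeas.apply_eq_mul_of_rank_le_one hrank.le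
  have hX (i i') : blkX M i i' = lastX M i * lastX M i' := hM _ _
  have hY (j j') : blkY M j j' = lastY M j * lastY M j' := hM _ _
  have hP (i j) : blkP M i j = lastX M i * lastY M j := hM _ _
  have hZ (j i) : blkZ M j i = lastY M j * lastX M i := hM _ _
  have hnash := hfeas.isNash_of_rank_le_one hrank.le
  obtain ⟨-, -, -, hx, hy, -⟩ := hfeas
  simp only [hX, hY, hP, hZ, ← Finset.mul_sum, hx, hy, mul_one, implies_true, true_and]
  refine ⟨hnash.sum_mul_le_sum_mul, fun j k => ?_⟩
  simpa only [transpose_apply, mul_comm (lastY M j)] using hnash.transpose.sum_mul_le_sum_mul j k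
end

section
/- Let A, B be m×n real matrices and let M' be an SDP2-feasible solution for the game (A,B). Let M = [[X, P],[Z, Y]] denote the upper-left (m+n)×(m+n) block of M' and let z ∈ ℝ^{m+n} be the concatenation of x and y. Then: (1) the distribution constraints hold: Σ_{i,j} X_{ij} = Σ_{i,j} Z_{ij} = Σ_{i,j} Y_{ij} = 1; and (2) the McCormick inequalities hold: M_{ij} ≤ z_i for all i,j ∈ {1,…,m+n}, and M_{ij} + 1 ≥ z_i + z_j for all i,j ∈ {1,…,m+n}. -/
open Matrix BigOperators

variable {m n : ℕ}

/-!
Each of the blocks `X`, `P`, `Z`, `Y` is a joint distribution `μ` with marginals `x` or `y`: the row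
constraints give one marginal and the symmetry of `M'` the other. The McCormick inequalities are
then the Fréchet bounds `μ(E ∩ F) ≤ μ(E)` and `μ(E) + μ(F) ≤ μ(E ∩ F) + 1` for the event `E` of
drawing row `a` and the event `F` of drawing column `b`.
-/

section Coupling

variable {α β R : Type*} [Fintype α] [Fintype β] [AddCommMonoid R] [PartialOrder R]

/-- `Q` is a coupling of `r` and `c`: a joint mass function whose marginals are `r` (along rows)
and `c` (along columns). The masses are not normalized, so that `R` needs no unit. -/
structure IsCoupling (Q : Matrix α β R) (r : α → R) (c : β → R) : Prop where
  nonneg : ∀ a b, 0 ≤ Q a b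
  sum_row : ∀ a, ∑ b, Q a b = r a
  sum_col : ∀ b, ∑ a, Q a b = c b

theorem sum_row_add_sum_col_le [IsOrderedAddMonoid R] {Q : Matrix α β R}
    (hQ : ∀ a b, 0 ≤ Q a b) (a : α) (b : β) :
    ∑ b', Q a b' + ∑ a', Q a' b ≤ Q a b + ∑ a', ∑ b', Q a' b' := by
  classical
  have entry_le_row (a' : α) : Q a' b ≤ ∑ b', Q a' b' :=
    Finset.single_le_sum (fun b' _ => hQ a' b') (Finset.mem_univ b)
  calc ∑ b', Q a b' + ∑ a', Q a' b
      = ∑ b', Q a b' + (Q a b + ∑ a' ∈ Finset.univ.erase a, Q a' b) := by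
        rw [Finset.add_sum_erase _ (Q · b) (Finset.mem_univ a)]
    _ ≤ ∑ b', Q a b' + (Q a b + ∑ a' ∈ Finset.univ.erase a, ∑ b', Q a' b') := by
        gcongr with a'
        exact entry_le_row a'
    _ = Q a b + ∑ a', ∑ b', Q a' b' := by
        rw [add_left_comm, Finset.add_sum_erase _ (fun a' => ∑ b', Q a' b') (Finset.mem_univ a)]

namespace IsCoupling

variable {Q : Matrix α β R} {r : α → R} {c : β → R}

theorem of_isSymm {Q : Matrix α α R} {r : α → R} (hsymm : Q.IsSymm)
    (hQ : ∀ a b, 0 ≤ Q a b) (hr : ∀ a, ∑ b, Q a b = r a) : IsCoupling Q r r where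
  nonneg := hQ
  sum_row := hr
  sum_col b := by simpa only [hsymm.apply] using hr b

theorem transpose (h : IsCoupling Q r c) : IsCoupling Qᵀ c r :=
  ⟨fun b a => h.nonneg a b, h.sum_col, h.sum_row⟩

theorem sum_sum (h : IsCoupling Q r c) : ∑ a, ∑ b, Q a b = ∑ a, r a :=
  Finset.sum_congr rfl fun a _ => h.sum_row a

theorem sum_left_eq_sum_right (h : IsCoupling Q r c) : ∑ a, r a = ∑ b, c b :=
  calc ∑ a, r a = ∑ a, ∑ b, Q a b := h.sum_sum.symm
    _ = ∑ b, ∑ a, Q a b := Finset.sum_comm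
    _ = ∑ b, c b := h.transpose.sum_sum

variable [IsOrderedAddMonoid R]

theorem apply_le_left (h : IsCoupling Q r c) (a : α) (b : β) : Q a b ≤ r a :=
  h.sum_row a ▸ Finset.single_le_sum (fun b' _ => h.nonneg a b') (Finset.mem_univ b)

theorem left_add_right_le (h : IsCoupling Q r c) (a : α) (b : β) :
    r a + c b ≤ Q a b + ∑ a', r a' := by
  rw [← h.sum_row a, ← h.sum_col b, ← h.sum_sum]
  exact sum_row_add_sum_col_le h.nonneg a b

end IsCoupling

theorem stmt3_general [IsOrderedAddMonoid R] {Q : Matrix (α ⊕ β) (α ⊕ β) R}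
    {x : α → R} {y : β → R} {s : R} (hsymm : Q.IsSymm) (hQ : ∀ a b, 0 ≤ Q a b)
    (hx : ∑ i, x i = s)
    (h₁₁ : ∀ i, ∑ j, Q.toBlocks₁₁ i j = x i) (h₁₂ : ∀ i, ∑ j, Q.toBlocks₁₂ i j = x i)
    (h₂₂ : ∀ i, ∑ j, Q.toBlocks₂₂ i j = y i) (h₂₁ : ∀ i, ∑ j, Q.toBlocks₂₁ i j = y i) :
    (∑ i, ∑ j, Q.toBlocks₁₁ i j = s) ∧
    (∑ i, ∑ j, Q.toBlocks₂₁ i j = s) ∧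
    (∑ i, ∑ j, Q.toBlocks₂₂ i j = s) ∧
    (∀ a b, Q a b ≤ Sum.elim x y a) ∧
    (∀ a b, Sum.elim x y a + Sum.elim x y b ≤ Q a b + s) := by
  have coupling₁₁ : IsCoupling Q.toBlocks₁₁ x x :=
    .of_isSymm (hsymm.submatrix Sum.inl) (fun _ _ => hQ _ _) h₁₁
  have coupling₂₂ : IsCoupling Q.toBlocks₂₂ y y :=
    .of_isSymm (hsymm.submatrix Sum.inr) (fun _ _ => hQ _ _) h₂₂
  have coupling₂₁ : IsCoupling Q.toBlocks₂₁ y x :=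
    ⟨fun _ _ => hQ _ _, h₂₁,
      fun i => (Finset.sum_congr rfl fun _ _ => hsymm.apply _ _).trans (h₁₂ i)⟩
  have transpose_toBlocks₂₁ : Q.toBlocks₂₁ᵀ = Q.toBlocks₁₂ :=
    Matrix.ext fun _ _ => hsymm.apply _ _
  have coupling₁₂ : IsCoupling Q.toBlocks₁₂ x y :=
    transpose_toBlocks₂₁ ▸ coupling₂₁.transpose
  have hy : ∑ j, y j = s := coupling₂₁.sum_left_eq_sum_right.trans hx
  refine ⟨coupling₁₁.sum_sum.trans hx, coupling₂₁.sum_sum.trans hy, coupling₂₂.sum_sum.trans hy,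
    ?_, ?_⟩
  · rintro (i | i) (j | j)
    exacts [coupling₁₁.apply_le_left i j, coupling₁₂.apply_le_left i j,
      coupling₂₁.apply_le_left i j, coupling₂₂.apply_le_left i j]
  · rintro (i | i) (j | j)
    exacts [hx ▸ coupling₁₁.left_add_right_le i j, hx ▸ coupling₁₂.left_add_right_le i j,
      hy ▸ coupling₂₁.left_add_right_le i j, hy ▸ coupling₂₂.left_add_right_le i j]

end Coupling

/-- Any SDP2-feasible solution satisfies the distribution constraints and the
McCormick inequalities. -/
theorem stmt3 (A B : Matrix (Fin m) (Fin n) ℝ)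
    (M : Matrix (SDPIdx m n) (SDPIdx m n) ℝ)
    (hfeas : SDP2Feasible A B M) :
    (∑ i, ∑ j, blkX M i j = 1) ∧
    (∑ j, ∑ i, blkZ M j i = 1) ∧
    (∑ j, ∑ j', blkY M j j' = 1) ∧
    (∀ a b : Fin m ⊕ Fin n,
      upperBlock M a b ≤ Sum.elim (lastX M) (lastY M) a) ∧
    (∀ a b : Fin m ⊕ Fin n,
      upperBlock M a b + 1 ≥ Sum.elim (lastX M) (lastY M) a + Sum.elim (lastX M) (lastY M) b) := by
  obtain ⟨⟨hpsd, hnonneg, -, hx, -⟩, hX, hP, hY, hZ, -⟩ := hfeas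
  exact stmt3_general (Q := upperBlock M) ((isHermitian_iff_isSymm.1 hpsd.isHermitian).submatrix _)
    (fun _ _ => hnonneg _ _) hx hX hP hY hZ
end

section
/- Let A be an m×n real matrix and consider the zero-sum game (A, −A). If M' is an SDP1-feasible solution for the game (A, −A), then the pair (x,y) from the last column of M' is a Nash equilibrium of (A, −A). -/
open Matrix BigOperators

variable {m n : ℕ}

/-!
Averaging the bounds `(Ay)_i ≤ v` with the weights `x` and the bounds `(Bᵀx)_j ≤ w` with the weights
`y` gives `xᵀAy ≤ v` and `xᵀBy ≤ w`. If also `v + w ≤ xᵀAy + xᵀBy`, both are equalities, so neither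
player can beat their payoff by a pure deviation. An SDP1-feasible solution of `(A, -A)` supplies
such bounds with `v = Tr(AZ)` and `w = -v`, and then both sides of the last inequality are zero.
-/

lemma dotProduct_le_of_forall_le {ι R : Type*} [Fintype ι] [Semiring R] [PartialOrder R]
    [IsOrderedRing R] {w f : ι → R} {c : R} (hw : 0 ≤ w) (hw_sum : ∑ i, w i = 1)
    (hf : ∀ i, f i ≤ c) : w ⬝ᵥ f ≤ c :=
  calc
    w ⬝ᵥ f ≤ w ⬝ᵥ fun _ => c := dotProduct_le_dotProduct_of_nonneg_left hf hw
    _ = c := by rw [dotProduct, ← Finset.sum_mul, hw_sum, one_mul]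

lemma sum_sum_mul_mul_eq_dotProduct_mulVec {ι κ R : Type*} [Fintype ι] [Fintype κ]
    [NonUnitalSemiring R] (A : Matrix ι κ R) (x : ι → R) (y : κ → R) :
    ∑ i, ∑ j, x i * A i j * y j = x ⬝ᵥ A *ᵥ y := by
  simp only [dotProduct, mulVec, Finset.mul_sum, mul_assoc]

lemma isNash_iff_mulVec_le {A B : Matrix (Fin m) (Fin n) ℝ} {x : Fin m → ℝ} {y : Fin n → ℝ} :
    IsNash A B x y ↔ InSimplex x ∧ InSimplex y ∧
      (∀ i, (A *ᵥ y) i ≤ x ⬝ᵥ A *ᵥ y) ∧ (∀ j, (Bᵀ *ᵥ x) j ≤ x ⬝ᵥ B *ᵥ y) := by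
  simp only [IsNash, sum_sum_mul_mul_eq_dotProduct_mulVec, ge_iff_le]
  rfl

theorem stmt4_general {A B : Matrix (Fin m) (Fin n) ℝ} {x : Fin m → ℝ} {y : Fin n → ℝ} {v w : ℝ}
    (hx : InSimplex x) (hy : InSimplex y) (hAy : ∀ i, (A *ᵥ y) i ≤ v)
    (hBx : ∀ j, (Bᵀ *ᵥ x) j ≤ w) (hvw : v + w ≤ x ⬝ᵥ (A + B) *ᵥ y) :
    IsNash A B x y := by
  have row_payoff_le : x ⬝ᵥ A *ᵥ y ≤ v := dotProduct_le_of_forall_le hx.1 hx.2 hAy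
  have col_payoff_le : x ⬝ᵥ B *ᵥ y ≤ w := by
    rw [← dotProduct_transpose_mulVec]
    exact dotProduct_le_of_forall_le hy.1 hy.2 hBx
  rw [add_mulVec, dotProduct_add] at hvw
  exact isNash_iff_mulVec_le.2
    ⟨hx, hy, fun i => (hAy i).trans (by linarith), fun j => (hBx j).trans (by linarith)⟩

/-- For a zero-sum game `(A, −A)`, the last column of any SDP1-feasible
solution is a Nash equilibrium. -/
theorem stmt4 (A : Matrix (Fin m) (Fin n) ℝ)
    (M : Matrix (SDPIdx m n) (SDPIdx m n) ℝ)
    (hfeas : SDP1Feasible A (-A) M) :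
    IsNash A (-A) (lastX M) (lastY M) := by
  obtain ⟨-, hM_nonneg, -, hx_sum, hy_sum, hAy, hBx⟩ := hfeas
  exact stmt4_general ⟨fun _ => hM_nonneg _ _, hx_sum⟩ ⟨fun _ => hM_nonneg _ _, hy_sum⟩ hAy hBx
    (by simp)
end

section
/- Let A, B be m×n real matrices and let c, d, e, f be real scalars with c > 0 and e > 0. If a matrix M' is an SDP2-feasible solution for the game with payoff matrices (A, B), then M' is also an SDP2-feasible solution for the game with payoff matrices (cA + dJ, eB + fJ), where J denotes the m×n all-ones matrix. -/
open Matrix BigOperators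

variable {m n : ℕ}

/-!
Each constraint on a player compares two expected payoffs in which the opponent's actions carry the
same total weights: the vector `y` (or `x`) in a relaxed Nash constraint, a row of `P` (or of `Z`)
in a correlated equilibrium constraint. A payoff term that depends on the opponent's action alone
therefore adds the same number to both sides. For `Tr(AZ)` and `Tr(BZ)` this holds because the
matrix `P = Zᵀ` has marginals `x` and `y`.
-/

section StrategicEquivalence

variable {ι κ R : Type*} [Fintype κ] [Semiring R]

theorem smul_add_replicateRow_mulVec (c : R) (A : Matrix ι κ R) (v y : κ → R) (i : ι) :
    ((c • A + replicateRow ι v) *ᵥ y) i = c * (A *ᵥ y) i + v ⬝ᵥ y := by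
  rw [add_mulVec, smul_mulVec, replicateRow_mulVec_eq_const]
  rfl

theorem trace_replicateRow_mul [Fintype ι] (v : κ → R) (Q : Matrix κ ι R) :
    (replicateRow ι v * Q).trace = v ⬝ᵥ (Q *ᵥ 1) := by
  rw [dotProduct_mulVec, dotProduct_one]
  rfl

theorem trace_smul_add_replicateRow_mul [Fintype ι] (c : R) (A : Matrix ι κ R) (v : κ → R)
    (Q : Matrix κ ι R) :
    ((c • A + replicateRow ι v) * Q).trace = c * (A * Q).trace + v ⬝ᵥ (Q *ᵥ 1) := by
  rw [Matrix.add_mul, trace_add, smul_mul, trace_smul, smul_eq_mul, trace_replicateRow_mul]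

/-- The SDP2 constraints on the payoffs `A` of one player, whose own actions index the rows: the
relaxed Nash constraints against the mixed strategy `y` of the opponent, and the correlated
equilibrium constraints under the distribution `P` of action pairs, with `Pᵀ` in the role of `Z`.
The column player is covered by transposing both matrices. -/
structure IncentiveConstraints [Fintype ι] [LE R] (A P : Matrix ι κ R) (y : κ → R) : Prop where
  mulVec_le_trace : ∀ i, (A *ᵥ y) i ≤ (A * Pᵀ).trace
  mulVec_row_le : ∀ i k, (A *ᵥ P i) k ≤ (A *ᵥ P i) i

theorem IncentiveConstraints.smul_add_replicateRow [Fintype ι] [PartialOrder R] [IsOrderedRing R]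
    {A P : Matrix ι κ R} {y : κ → R} (h : IncentiveConstraints A P y) (hy : Pᵀ *ᵥ 1 = y)
    {c : R} (hc : 0 ≤ c) (v : κ → R) :
    IncentiveConstraints (c • A + replicateRow ι v) P y where
  mulVec_le_trace i := by
    rw [smul_add_replicateRow_mulVec, trace_smul_add_replicateRow_mul, hy]
    gcongr
    exact h.mulVec_le_trace i
  mulVec_row_le i k := by
    rw [smul_add_replicateRow_mulVec, smul_add_replicateRow_mulVec]
    gcongr
    exact h.mulVec_row_le i k

end StrategicEquivalence

/-- The SDP2 constraints that do not involve the payoff matrices. -/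
structure PayoffFreeFeasible (M : Matrix (SDPIdx m n) (SDPIdx m n) ℝ) : Prop where
  posSemidef : M.PosSemidef
  nonneg : ∀ a b, 0 ≤ M a b
  corner : M (Sum.inr ()) (Sum.inr ()) = 1
  sum_lastX : ∑ i, lastX M i = 1
  sum_lastY : ∑ j, lastY M j = 1
  sum_blkX : ∀ i, ∑ i', blkX M i i' = lastX M i
  sum_blkP : ∀ i, ∑ j, blkP M i j = lastX M i
  sum_blkY : ∀ j, ∑ j', blkY M j j' = lastY M j
  sum_blkZ : ∀ j, ∑ i, blkZ M j i = lastY M j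

section Feasibility

variable {A B : Matrix (Fin m) (Fin n) ℝ} {M : Matrix (SDPIdx m n) (SDPIdx m n) ℝ}

theorem transpose_blkP (hM : M.IsHermitian) : (of (blkP M))ᵀ = of (blkZ M) := by
  ext j i
  exact hM.apply (Sum.inl (Sum.inr j)) (Sum.inl (Sum.inl i))

theorem SDP2Feasible.payoffFreeFeasible (h : SDP2Feasible A B M) : PayoffFreeFeasible M := by
  obtain ⟨⟨hpsd, hnonneg, hcorner, hx, hy, -, -⟩, hX, hP, hY, hZ, -, -⟩ := h
  exact ⟨hpsd, hnonneg, hcorner, hx, hy, hX, hP, hY, hZ⟩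

namespace PayoffFreeFeasible

theorem blkP_mulVec_one (hM : PayoffFreeFeasible M) : of (blkP M) *ᵥ 1 = lastX M := by
  ext i
  exact (dotProduct_one _).trans (hM.sum_blkP i)

theorem transpose_blkP_mulVec_one (hM : PayoffFreeFeasible M) :
    (of (blkP M))ᵀ *ᵥ 1 = lastY M := by
  rw [transpose_blkP hM.posSemidef.isHermitian]
  ext j
  exact (dotProduct_one _).trans (hM.sum_blkZ j)

theorem trace_mul_transpose_blkP (hM : PayoffFreeFeasible M) (C : Matrix (Fin m) (Fin n) ℝ) :
    (C * (of (blkP M))ᵀ).trace = ∑ i, ∑ j, C i j * blkZ M j i := by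
  rw [transpose_blkP hM.posSemidef.isHermitian]
  rfl

theorem sdp2Feasible_iff (hM : PayoffFreeFeasible M) :
    SDP2Feasible A B M ↔
      IncentiveConstraints A (of (blkP M)) (lastY M) ∧
        IncentiveConstraints Bᵀ (of (blkP M))ᵀ (lastX M) := by
  have htraceA := hM.trace_mul_transpose_blkP A
  have htraceB := (trace_transpose_mul B (of (blkP M))ᵀ).trans (hM.trace_mul_transpose_blkP B)
  constructor
  · rintro ⟨⟨-, -, -, -, -, hnashA, hnashB⟩, -, -, -, -, hcorrA, hcorrB⟩
    exact ⟨⟨fun i => (hnashA i).trans_eq htraceA.symm, hcorrA⟩,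
      ⟨fun j => (hnashB j).trans_eq htraceB.symm, hcorrB⟩⟩
  · rintro ⟨hA, hB⟩
    exact ⟨⟨hM.posSemidef, hM.nonneg, hM.corner, hM.sum_lastX, hM.sum_lastY,
        fun i => (hA.mulVec_le_trace i).trans_eq htraceA,
        fun j => (hB.mulVec_le_trace j).trans_eq htraceB⟩,
      hM.sum_blkX, hM.sum_blkP, hM.sum_blkY, hM.sum_blkZ, hA.mulVec_row_le, hB.mulVec_row_le⟩

end PayoffFreeFeasible

end Feasibility

theorem smul_allOnesM_eq_replicateRow (d : ℝ) :
    d • allOnesM m n = replicateRow (Fin m) fun _ => d := by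
  ext
  simp [allOnesM]

theorem smul_allOnesM_eq_replicateCol (f : ℝ) :
    f • allOnesM m n = replicateCol (Fin n) fun _ => f := by
  ext
  simp [allOnesM]

theorem stmt5_general {A B : Matrix (Fin m) (Fin n) ℝ} {c e : ℝ} (hc : 0 ≤ c) (he : 0 ≤ e)
    (v : Fin n → ℝ) (w : Fin m → ℝ) {M : Matrix (SDPIdx m n) (SDPIdx m n) ℝ}
    (hfeas : SDP2Feasible A B M) :
    SDP2Feasible (c • A + replicateRow (Fin m) v) (e • B + replicateCol (Fin n) w) M := by
  have hM := hfeas.payoffFreeFeasible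
  obtain ⟨hA, hB⟩ := hM.sdp2Feasible_iff.1 hfeas
  refine hM.sdp2Feasible_iff.2
    ⟨hA.smul_add_replicateRow hM.transpose_blkP_mulVec_one hc v, ?_⟩
  rw [transpose_add, transpose_smul, transpose_replicateCol]
  exact hB.smul_add_replicateRow hM.blkP_mulVec_one he w

/-- SDP2 feasibility is invariant under positive scaling and shifting of the
payoff matrices. -/
theorem stmt5 (A B : Matrix (Fin m) (Fin n) ℝ) (c d e f : ℝ) (hc : 0 < c) (he : 0 < e)
    (M : Matrix (SDPIdx m n) (SDPIdx m n) ℝ)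
    (hfeas : SDP2Feasible A B M) :
    SDP2Feasible (c • A + d • allOnesM m n) (e • B + f • allOnesM m n) M := by
  rw [smul_allOnesM_eq_replicateRow, smul_allOnesM_eq_replicateCol]
  exact stmt5_general hc.le he.le _ _ hfeas
end

section
/- Let A, B be m×n real matrices and suppose the game (A,B) is strictly competitive, i.e., there exist scalars c > 0, e > 0 and d, f ∈ ℝ such that cA + dJ = −eB + fJ, where J is the m×n all-ones matrix. If M' is an SDP2-feasible solution for the game (A,B), then the pair (x,y) from the last column of M' is a Nash equilibrium of (A,B). -/
open Matrix BigOperators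

variable {m n : ℕ}

/-!
In a strictly competitive game some positive combination `c A + e B` is a constant matrix, so
`c Tr(AZ) + e Tr(BZ)` takes the same value at every `Z` of total mass `1`, in particular at
`Z = y xᵀ`. Averaging the relaxed Nash constraints against `x` and against `y` gives
`xᵀAy ≤ Tr(AZ)` and `xᵀBy ≤ Tr(BZ)`; as `c` and `e` are positive, both are equalities, and the
relaxed constraints become those of a Nash equilibrium.
-/

section BimatrixGame

variable {ι κ R : Type*}

section StrictlyCompetitive

variable [CommRing R] [PartialOrder R]

/-- A bimatrix game is strictly competitive if increasing affine changes of the two payoffs turn it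
into a zero-sum game. The matrix `of fun _ _ => 1` is the all-ones matrix `J`. -/
def IsStrictlyCompetitive (A B : Matrix ι κ R) : Prop :=
  ∃ c d e f : R, 0 < c ∧ 0 < e ∧
    c • A + d • (of fun _ _ => 1) = -(e • B) + f • (of fun _ _ => 1)

lemma IsStrictlyCompetitive.swap {A B : Matrix ι κ R}
    (h : IsStrictlyCompetitive A B) : IsStrictlyCompetitive Bᵀ Aᵀ := by
  obtain ⟨c, d, e, f, hc, he, h⟩ := h
  refine ⟨e, d, c, f, he, hc, ?_⟩
  ext j i
  have hij := congrFun₂ h i j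
  simp only [Matrix.add_apply, Matrix.neg_apply, Matrix.smul_apply, transpose_apply, of_apply]
    at hij ⊢
  linear_combination hij

end StrictlyCompetitive

variable [Fintype ι] [Fintype κ]

lemma trace_mul_vecMulVec [NonUnitalCommSemiring R] (A : Matrix ι κ R) (x : ι → R) (y : κ → R) :
    trace (A * vecMulVec y x) = x ⬝ᵥ A *ᵥ y := by
  rw [mul_vecMulVec, trace_vecMulVec, dotProduct_comm]

lemma dotProduct_le_of_mem_stdSimplex [Semiring R] [PartialOrder R] [IsOrderedRing R]
    {x v : ι → R} {t : R} (hx : x ∈ stdSimplex R ι) (hv : ∀ i, v i ≤ t) : x ⬝ᵥ v ≤ t :=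
  calc x ⬝ᵥ v ≤ ∑ i, x i * t :=
        Finset.sum_le_sum fun i _ => mul_le_mul_of_nonneg_left (hv i) (hx.1 i)
    _ = t := by rw [← Finset.sum_mul, hx.2, one_mul]

lemma sum_sum_vecMulVec [NonUnitalNonAssocSemiring R] (x : ι → R) (y : κ → R) :
    ∑ j, ∑ i, vecMulVec y x j i = (∑ j, y j) * ∑ i, x i :=
  (Finset.sum_mul_sum ..).symm

lemma trace_allOnes_mul [NonAssocSemiring R] (Z : Matrix κ ι R) :
    trace ((of fun _ _ => 1 : Matrix ι κ R) * Z) = ∑ j, ∑ i, Z j i := by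
  simp only [trace, diag_apply, mul_apply, of_apply, one_mul]
  exact Finset.sum_comm

section PartialOrder

variable [CommRing R] [PartialOrder R]

/-- A pair of mixed strategies is a Nash equilibrium of the bimatrix game `(A, B)`: `IsNash` for
arbitrary finite strategy sets and ordered payoff rings. -/
structure IsNashEquilibrium (A B : Matrix ι κ R) (x : ι → R) (y : κ → R) : Prop where
  left_mem : x ∈ stdSimplex R ι
  right_mem : y ∈ stdSimplex R κ
  row_le (i : ι) : (A *ᵥ y) i ≤ x ⬝ᵥ A *ᵥ y
  col_le (j : κ) : (Bᵀ *ᵥ x) j ≤ x ⬝ᵥ B *ᵥ y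

/-- The linear part of the relaxation of the Nash conditions: the rank-one matrix `y xᵀ` is
replaced by an arbitrary matrix `Z` of total mass `1`, whose entries may even be negative. -/
structure IsRelaxedNashEquilibrium (A B : Matrix ι κ R) (x : ι → R) (y : κ → R)
    (Z : Matrix κ ι R) : Prop where
  left_mem : x ∈ stdSimplex R ι
  right_mem : y ∈ stdSimplex R κ
  sum_eq_one : ∑ j, ∑ i, Z j i = 1
  row_le (i : ι) : (A *ᵥ y) i ≤ trace (A * Z)
  col_le (j : κ) : (Bᵀ *ᵥ x) j ≤ trace (B * Z)

variable {A B : Matrix ι κ R} {x : ι → R} {y : κ → R} {Z : Matrix κ ι R}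

lemma IsStrictlyCompetitive.exists_trace_eq (h : IsStrictlyCompetitive A B) :
    ∃ c e k : R, 0 < c ∧ 0 < e ∧ ∀ Z : Matrix κ ι R, ∑ j, ∑ i, Z j i = 1 →
      c * trace (A * Z) + e * trace (B * Z) = k := by
  obtain ⟨c, d, e, f, hc, he, h⟩ := h
  refine ⟨c, e, f - d, hc, he, fun Z hZ => ?_⟩
  have htrace := congrArg (fun C => trace (C * Z)) h
  simp only [Matrix.add_mul, Matrix.neg_mul, Matrix.smul_mul, trace_add, trace_neg, trace_smul,
    trace_allOnes_mul, hZ, smul_eq_mul] at htrace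
  linear_combination htrace

lemma IsRelaxedNashEquilibrium.swap (h : IsRelaxedNashEquilibrium A B x y Z) :
    IsRelaxedNashEquilibrium Bᵀ Aᵀ y x Zᵀ where
  left_mem := h.right_mem
  right_mem := h.left_mem
  sum_eq_one := Finset.sum_comm.trans h.sum_eq_one
  row_le j := by simpa only [trace_transpose_mul] using h.col_le j
  col_le i := by simpa only [trace_transpose_mul, transpose_transpose] using h.row_le i

lemma IsRelaxedNashEquilibrium.dotProduct_mulVec_le [IsOrderedRing R]
    (h : IsRelaxedNashEquilibrium A B x y Z) : x ⬝ᵥ A *ᵥ y ≤ trace (A * Z) :=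
  dotProduct_le_of_mem_stdSimplex h.left_mem h.row_le

end PartialOrder

section LinearOrder

variable [CommRing R] [LinearOrder R] [IsStrictOrderedRing R] {A B : Matrix ι κ R} {x : ι → R}
  {y : κ → R} {Z : Matrix κ ι R}

lemma IsRelaxedNashEquilibrium.trace_mul_le (h : IsRelaxedNashEquilibrium A B x y Z)
    (hAB : IsStrictlyCompetitive A B) : trace (A * Z) ≤ x ⬝ᵥ A *ᵥ y := by
  obtain ⟨c, e, k, hc, he, hk⟩ := hAB.exists_trace_eq
  have hZ : c * trace (A * Z) + e * trace (B * Z) = k := hk Z h.sum_eq_one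
  have hmass : ∑ j, ∑ i, vecMulVec y x j i = 1 := by
    rw [sum_sum_vecMulVec, h.left_mem.2, h.right_mem.2, one_mul]
  have hxy : c * (x ⬝ᵥ A *ᵥ y) + e * (x ⬝ᵥ B *ᵥ y) = k := by
    simpa only [trace_mul_vecMulVec] using hk (vecMulVec y x) hmass
  have hB : x ⬝ᵥ B *ᵥ y ≤ trace (B * Z) := by
    simpa only [trace_transpose_mul, dotProduct_transpose_mulVec] using h.swap.dotProduct_mulVec_le
  have heB : e * (x ⬝ᵥ B *ᵥ y) ≤ e * trace (B * Z) := mul_le_mul_of_nonneg_left hB he.le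
  exact le_of_mul_le_mul_left (by linarith) hc

theorem stmt6_general (hAB : IsStrictlyCompetitive A B)
    (h : IsRelaxedNashEquilibrium A B x y Z) : IsNashEquilibrium A B x y where
  left_mem := h.left_mem
  right_mem := h.right_mem
  row_le i := (h.row_le i).trans (h.trace_mul_le hAB)
  col_le j := by
    have hB : trace (B * Z) ≤ x ⬝ᵥ B *ᵥ y := by
      simpa only [trace_transpose_mul, dotProduct_transpose_mulVec] using
        h.swap.trace_mul_le hAB.swap
    exact (h.col_le j).trans hB

end LinearOrder

end BimatrixGame

lemma IsNashEquilibrium.isNash {A B : Matrix (Fin m) (Fin n) ℝ} {x : Fin m → ℝ} {y : Fin n → ℝ}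
    (h : IsNashEquilibrium A B x y) : IsNash A B x y := by
  have payoff_eq (C : Matrix (Fin m) (Fin n) ℝ) :
      x ⬝ᵥ C *ᵥ y = ∑ i, ∑ j, x i * C i j * y j := by
    simp only [dotProduct, mulVec, Finset.mul_sum, mul_assoc]
  exact ⟨h.left_mem, h.right_mem, fun i => (h.row_le i).trans_eq (payoff_eq A),
    fun j => (h.col_le j).trans_eq (payoff_eq B)⟩

lemma SDP1Feasible.isRelaxedNashEquilibrium {A B : Matrix (Fin m) (Fin n) ℝ}
    {M : Matrix (SDPIdx m n) (SDPIdx m n) ℝ} (h : SDP1Feasible A B M)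
    (hZ : ∀ j, ∑ i, blkZ M j i = lastY M j) :
    IsRelaxedNashEquilibrium A B (lastX M) (lastY M) (of (blkZ M)) := by
  obtain ⟨-, hnonneg, -, hx, hy, hA, hB⟩ := h
  exact ⟨⟨fun _ => hnonneg _ _, hx⟩, ⟨fun _ => hnonneg _ _, hy⟩,
    (Finset.sum_congr rfl fun j _ => hZ j).trans hy, hA, hB⟩

/-- For a strictly competitive game, the last column of any SDP2-feasible
solution is a Nash equilibrium. -/
theorem stmt6 (A B : Matrix (Fin m) (Fin n) ℝ) (c d e f : ℝ) (hc : 0 < c) (he : 0 < e)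
    (hsc : c • A + d • allOnesM m n = -(e • B) + f • allOnesM m n)
    (M : Matrix (SDPIdx m n) (SDPIdx m n) ℝ)
    (hfeas : SDP2Feasible A B M) :
    IsNash A B (lastX M) (lastY M) := by
  obtain ⟨hSDP1, -, -, -, hZ, -⟩ := hfeas
  exact (stmt6_general ⟨c, d, e, f, hc, he, hsc⟩ (hSDP1.isRelaxedNashEquilibrium hZ)).isNash
end

section
/- Let M be a symmetric (m+n)×(m+n) real matrix with block form M = [[X, P],[Z, Y]] (X ∈ ℝ^{m×m}, P ∈ ℝ^{m×n}, Z = P^T, Y ∈ ℝ^{n×n}) satisfying the distribution constraints Σ_{i,j} X_{ij} = Σ_{i,j} Z_{ij} = Σ_{i,j} Y_{ij} = 1. Suppose M = Σ_{i=1}^k λ_i v_i v_i^T where each λ_i ≥ 0 and each v_i ∈ ℝ^{m+n} is partitioned as v_i = (a_i, b_i) with a_i ∈ ℝ^m, b_i ∈ ℝ^n. Then for every i with λ_i > 0, Σ_{j=1}^m (a_i)_j = Σ_{j=1}^n (b_i)_j. -/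
open Matrix BigOperators

variable {m n : ℕ}

/-! Put `w = (1, …, 1, -1, …, -1)`, with the sign change between the two blocks. The quadratic
form of `M` at `w` is `∑ X - ∑ P - ∑ Z + ∑ Y = 0`, and also `∑ i, lam i * (w ⬝ᵥ v i) ^ 2`, a sum of
nonnegative terms. So each `w ⬝ᵥ v i` with `0 < lam i` vanishes, and `w ⬝ᵥ v i` is the difference of
the coordinate sums of the two halves of `v i`. -/

section RankOneDecomposition

variable {R ι κ κ' : Type*} [Fintype κ] [Fintype κ']

theorem dotProduct_sum_smul_vecMulVec_mulVec [CommSemiring R] (s : Finset ι) (c : ι → R)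
    (u : ι → κ → R) (v : ι → κ' → R) (x : κ → R) (y : κ' → R) :
    x ⬝ᵥ (∑ i ∈ s, c i • vecMulVec (u i) (v i)) *ᵥ y
      = ∑ i ∈ s, c i * ((x ⬝ᵥ u i) * (v i ⬝ᵥ y)) := by
  simp only [sum_mulVec, dotProduct_sum, smul_mulVec, vecMulVec_mulVec, dotProduct_smul,
    MulOpposite.smul_eq_mul_unop, MulOpposite.unop_op, smul_eq_mul]

theorem dotProduct_sum_smul_vecMulVec_self_mulVec_eq_zero_iff [CommRing R] [LinearOrder R]
    [IsStrictOrderedRing R] {s : Finset ι} {c : ι → R} (hc : ∀ i ∈ s, 0 ≤ c i)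
    (v : ι → κ → R) (x : κ → R) :
    x ⬝ᵥ (∑ i ∈ s, c i • vecMulVec (v i) (v i)) *ᵥ x = 0 ↔
      ∀ i ∈ s, c i = 0 ∨ x ⬝ᵥ v i = 0 := by
  have hterm : ∀ i ∈ s, 0 ≤ c i * ((x ⬝ᵥ v i) * (x ⬝ᵥ v i)) := fun i hi ↦
    mul_nonneg (hc i hi) (mul_self_nonneg _)
  simp only [dotProduct_sum_smul_vecMulVec_mulVec, dotProduct_comm _ x,
    Finset.sum_eq_zero_iff_of_nonneg hterm, mul_eq_zero, or_self]

end RankOneDecomposition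

section BlockSums

variable {R α β : Type*} [Fintype α] [Fintype β] [CommRing R]

theorem sumElim_one_neg_one_dotProduct (v : α ⊕ β → R) :
    Sum.elim 1 (-1) ⬝ᵥ v = ∑ a, v (Sum.inl a) - ∑ b, v (Sum.inr b) := by
  simp [dotProduct, sub_eq_add_neg]

theorem sumElim_one_neg_one_dotProduct_mulVec (M : Matrix (α ⊕ β) (α ⊕ β) R) :
    Sum.elim 1 (-1) ⬝ᵥ M *ᵥ Sum.elim 1 (-1)
      = (∑ a, ∑ a', M (Sum.inl a) (Sum.inl a') + ∑ b, ∑ b', M (Sum.inr b) (Sum.inr b'))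
        - (∑ a, ∑ b, M (Sum.inl a) (Sum.inr b) + ∑ b, ∑ a, M (Sum.inr b) (Sum.inl a)) := by
  simp only [sumElim_one_neg_one_dotProduct, mulVec, dotProduct_comm (M _),
    Finset.sum_sub_distrib]
  ring

end BlockSums

theorem stmt8_general {R α β ι : Type*} [CommRing R] [LinearOrder R] [IsStrictOrderedRing R]
    [Fintype α] [Fintype β] [Fintype ι] {M : Matrix (α ⊕ β) (α ⊕ β) R}
    {lam : ι → R} {v : ι → α ⊕ β → R} (hlam : ∀ i, 0 ≤ lam i)
    (hM : M = ∑ i, lam i • vecMulVec (v i) (v i))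
    (hsum : ∑ a, ∑ a', M (Sum.inl a) (Sum.inl a') + ∑ b, ∑ b', M (Sum.inr b) (Sum.inr b')
      = ∑ a, ∑ b, M (Sum.inl a) (Sum.inr b) + ∑ b, ∑ a, M (Sum.inr b) (Sum.inl a)) (i : ι)
    (hi : 0 < lam i) : ∑ a, v i (Sum.inl a) = ∑ b, v i (Sum.inr b) := by
  have hform : Sum.elim 1 (-1) ⬝ᵥ M *ᵥ Sum.elim 1 (-1) = 0 := by
    rw [sumElim_one_neg_one_dotProduct_mulVec, hsum, sub_self]
  rw [hM, dotProduct_sum_smul_vecMulVec_self_mulVec_eq_zero_iff fun i _ ↦ hlam i] at hform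
  have hdot : Sum.elim 1 (-1) ⬝ᵥ v i = 0 := (hform i (Finset.mem_univ i)).resolve_left hi.ne'
  rwa [sumElim_one_neg_one_dotProduct, sub_eq_zero] at hdot

/-- partition lemma. If a symmetric block matrix satisfying the distribution
constraints decomposes as `M = Σ λ_i v_i v_iᵀ` with `λ_i ≥ 0`, then for every `i` with
`λ_i > 0` the two halves of `v_i` have equal coordinate sums. -/
theorem stmt8 {m n k : ℕ}
    (M : Matrix (Fin m ⊕ Fin n) (Fin m ⊕ Fin n) ℝ) (hsymm : M.IsSymm)
    (lam : Fin k → ℝ) (v : Fin k → (Fin m ⊕ Fin n) → ℝ)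
    (hlam : ∀ i, 0 ≤ lam i)
    (hM : M = ∑ i, lam i • Matrix.vecMulVec (v i) (v i))
    (hX : ∑ i, ∑ j, M (Sum.inl i) (Sum.inl j) = 1)
    (hZ : ∑ j, ∑ i, M (Sum.inr j) (Sum.inl i) = 1)
    (hY : ∑ j, ∑ j', M (Sum.inr j) (Sum.inr j') = 1) :
    ∀ i, 0 < lam i → ∑ j, v i (Sum.inl j) = ∑ j, v i (Sum.inr j) := by
  have hP : ∑ i, ∑ j, M (Sum.inl i) (Sum.inr j) = 1 := by
    simpa only [hsymm.apply] using Finset.sum_comm.trans hZ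
  exact stmt8_general hlam hM (by rw [hX, hY, hP, hZ])
end

section
/- Let k ≥ 1 and let a_1,…,a_k ∈ ℝ^m, b_1,…,b_k ∈ ℝ^n, and λ_1,…,λ_k, s_1,…,s_k ∈ ℝ satisfy Σ_{i=1}^k λ_i s_i^2 = 1. Define P = Σ_{i=1}^k λ_i a_i b_i^T, x = Σ_{i=1}^k λ_i s_i a_i, and y = Σ_{i=1}^k λ_i s_i b_i. Then P − x y^T = Σ_{1 ≤ i < j ≤ k} λ_i λ_j (s_j a_i − s_i a_j)(s_j b_i − s_i b_j)^T. -/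
open Matrix BigOperators

variable {m n : ℕ}

/- For a bilinear map `B`, expanding the products writes
`(∑ w s²) ∑ w B(a, b) - B(∑ w s a, ∑ w s b)` as the sum over all `(i, j)` of
`w i w j B(s j a i, s j b i - s i b j)`. The diagonal terms vanish, and the second argument changes
sign when `i` and `j` are exchanged, so the terms at `(i, j)` and `(j, i)` merge into a single value
of `B`, as in Lagrange's identity but without dividing by two. -/

theorem sum_sum_eq_sum_sum_lt_add_swap {ι M : Type*} [Fintype ι] [LinearOrder ι] [AddCommMonoid M]
    (f : ι → ι → M) (hf : ∀ i, f i i = 0) :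
    ∑ i, ∑ j, f i j = ∑ i, ∑ j with i < j, (f i j + f j i) := by
  let : LocallyFiniteOrderTop ι := .ofIci ι (fun i => {j | i ≤ j}) (by simp)
  let : LocallyFiniteOrderBot ι := .ofIic ι (fun i => {j | j ≤ i}) (by simp)
  calc ∑ i, ∑ j, f i j
      = ∑ i, ∑ j ∈ {i}ᶜ, f i j :=
        Finset.sum_congr rfl fun i _ => by rw [Fintype.sum_eq_add_sum_compl i, hf, zero_add]
    _ = ∑ i, ∑ j ∈ Finset.Ioi i, (f i j + f j i) :=
        (Finset.sum_sum_Ioi_add_eq_sum_sum_off_diag fun j i => f i j).symm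
    _ = ∑ i, ∑ j with i < j, (f i j + f j i) := by simp only [Finset.filter_lt_eq_Ioi]

section BilinearMap

variable {R E F G : Type*} [CommRing R] [AddCommGroup E] [AddCommGroup F] [AddCommGroup G]
  [Module R E] [Module R F] [Module R G] (B : E →ₗ[R] F →ₗ[R] G)

theorem map_sub_add_map_sub_swap (x y : E) (u v : F) :
    B x (u - v) + B y (v - u) = B (x - y) (u - v) := by
  rw [← neg_sub u v, map_neg, ← sub_eq_add_neg, ← LinearMap.sub_apply, ← map_sub]

theorem sum_smul_sum_sub_map_sum_sum {ι : Type*} [Fintype ι]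
    (w s : ι → R) (a : ι → E) (b : ι → F) :
    (∑ i, w i * s i ^ 2) • (∑ i, w i • B (a i) (b i)) -
      B (∑ i, (w i * s i) • a i) (∑ i, (w i * s i) • b i) =
    ∑ i, ∑ j, (w i * w j) • B (s j • a i) (s j • b i - s i • b j) := by
  have smul_sum_eq : (∑ i, w i * s i ^ 2) • (∑ i, w i • B (a i) (b i)) =
      ∑ i, ∑ j, (w i * w j) • B (s j • a i) (s j • b i) := by
    rw [Finset.sum_smul_sum, Finset.sum_comm]
    refine Finset.sum_congr rfl fun i _ => Finset.sum_congr rfl fun j _ => ?_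
    simp only [map_smul, LinearMap.smul_apply]
    module
  have map_sum_eq : B (∑ i, (w i * s i) • a i) (∑ i, (w i * s i) • b i) =
      ∑ i, ∑ j, (w i * w j) • B (s j • a i) (s i • b j) := by
    rw [LinearMap.map_sum₂]
    simp only [map_sum]
    refine Finset.sum_congr rfl fun i _ => Finset.sum_congr rfl fun j _ => ?_
    simp only [map_smul, LinearMap.smul_apply]
    module
  simp only [smul_sum_eq, map_sum_eq, map_sub, smul_sub, Finset.sum_sub_distrib]

theorem stmt9_general {ι : Type*} [Fintype ι] [LinearOrder ι]
    (w s : ι → R) (a : ι → E) (b : ι → F) :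
    (∑ i, w i * s i ^ 2) • (∑ i, w i • B (a i) (b i)) -
      B (∑ i, (w i * s i) • a i) (∑ i, (w i * s i) • b i) =
    ∑ i, ∑ j with i < j,
      (w i * w j) • B (s j • a i - s i • a j) (s j • b i - s i • b j) := by
  rw [sum_smul_sum_sub_map_sum_sum, sum_sum_eq_sum_sum_lt_add_swap]
  · refine Finset.sum_congr rfl fun i _ => Finset.sum_congr rfl fun j _ => ?_
    rw [mul_comm (w j), ← smul_add, map_sub_add_map_sub_swap]
  · intro i
    rw [sub_self, map_zero, smul_zero]

end BilinearMap

/-- representation lemma for `P − xyᵀ`. -/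
theorem stmt9 {m n k : ℕ} (hk : 1 ≤ k)
    (a : Fin k → Fin m → ℝ) (b : Fin k → Fin n → ℝ)
    (lam s : Fin k → ℝ) (hs : ∑ i, lam i * (s i) ^ 2 = 1) :
    (∑ i, lam i • Matrix.vecMulVec (a i) (b i)) -
      Matrix.vecMulVec (∑ i, (lam i * s i) • a i) (∑ i, (lam i * s i) • b i) =
    ∑ i : Fin k, ∑ j ∈ Finset.univ.filter (fun j => i < j),
      (lam i * lam j) • Matrix.vecMulVec (s j • a i - s i • a j) (s j • b i - s i • b j) := by
  simpa only [hs, one_smul, vecMulVecBilin_apply_apply] using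
    stmt9_general (vecMulVecBilin ℝ ℝ) lam s a b
end

section
/- Let A, B be m×n real matrices all of whose entries lie in [0,1], and let M' be an SDP2-feasible solution for the game (A,B), with blocks P = Z^T and last-column vectors x, y. Then ε(x,y) ≤ (1/2) Σ_{i=1}^m Σ_{j=1}^n |P_{ij} − x_i y_j|. -/
open Matrix BigOperators

variable {m n : ℕ}

/-!
The relaxed equilibrium constraints bound every best response against `x` or `y` by the payoff of
the joint distribution `P`, so both regrets are at most the payoff gap between `P` and `xyᵀ`.
Since `P` and `xyᵀ` have the same total mass, subtracting the midpoint of the payoff range `[a, b]`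
from all payoffs does not change this gap; the centred payoffs have absolute value at most
`(b - a) / 2`, so the gap is at most `(b - a) / 2 * ‖P - xyᵀ‖₁`.
-/

section PayoffGap

variable {K : Type*} [Field K] [LinearOrder K] [IsStrictOrderedRing K] {a b : K}

lemma sum_mul_le_of_mem_Icc_of_sum_eq_zero {ι : Type*} {s : Finset ι} {f g : ι → K}
    (hf : ∀ i ∈ s, f i ∈ Set.Icc a b) (hg : ∑ i ∈ s, g i = 0) :
    ∑ i ∈ s, f i * g i ≤ (b - a) / 2 * ∑ i ∈ s, |g i| := by
  have abs_centered_le : ∀ i ∈ s, |f i - (a + b) / 2| ≤ (b - a) / 2 := fun i hi => by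
    obtain ⟨ha, hb⟩ := hf i hi
    rw [abs_le]
    constructor <;> linarith
  calc ∑ i ∈ s, f i * g i
      = ∑ i ∈ s, (f i - (a + b) / 2) * g i := by
        simp only [sub_mul, Finset.sum_sub_distrib, ← Finset.mul_sum, hg, mul_zero, sub_zero]
    _ ≤ ∑ i ∈ s, (b - a) / 2 * |g i| := Finset.sum_le_sum fun i hi =>
        (le_abs_self _).trans <| (abs_mul _ _).trans_le <|
          mul_le_mul_of_nonneg_right (abs_centered_le i hi) (abs_nonneg _)
    _ = (b - a) / 2 * ∑ i ∈ s, |g i| := (Finset.mul_sum _ _ _).symm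

lemma payoff_sub_product_payoff_le {ι κ : Type*} [Fintype ι] [Fintype κ]
    {A P : Matrix ι κ K} {x : ι → K} {y : κ → K} (hA : ∀ i j, A i j ∈ Set.Icc a b)
    (hP : ∑ i, ∑ j, P i j = (∑ i, x i) * ∑ j, y j) :
    ∑ i, ∑ j, A i j * P i j - ∑ i, ∑ j, x i * A i j * y j ≤
      (b - a) / 2 * ∑ i, ∑ j, |P i j - x i * y j| := by
  have mass_eq_zero : ∑ p : ι × κ, (P p.1 p.2 - x p.1 * y p.2) = 0 := by
    simp only [Finset.sum_sub_distrib, Fintype.sum_prod_type, hP, Finset.sum_mul_sum, sub_self]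
  calc ∑ i, ∑ j, A i j * P i j - ∑ i, ∑ j, x i * A i j * y j
      = ∑ p : ι × κ, A p.1 p.2 * (P p.1 p.2 - x p.1 * y p.2) := by
        simp only [Fintype.sum_prod_type, mul_sub, Finset.sum_sub_distrib, mul_assoc,
          mul_left_comm (x _)]
    _ ≤ (b - a) / 2 * ∑ p : ι × κ, |P p.1 p.2 - x p.1 * y p.2| :=
        sum_mul_le_of_mem_Icc_of_sum_eq_zero (fun p _ => hA p.1 p.2) mass_eq_zero
    _ = (b - a) / 2 * ∑ i, ∑ j, |P i j - x i * y j| := by rw [Fintype.sum_prod_type]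

end PayoffGap

section Regret

variable {A B P : Matrix (Fin m) (Fin n) ℝ} {x : Fin m → ℝ} {y : Fin n → ℝ} {a b : ℝ}

lemma epsA_le_of_forall_le_payoff (hm : 0 < m) (hA : ∀ i j, A i j ∈ Set.Icc a b)
    (hP : ∑ i, ∑ j, P i j = (∑ i, x i) * ∑ j, y j)
    (hAP : ∀ k, ∑ j, A k j * y j ≤ ∑ i, ∑ j, A i j * P i j) :
    epsA A x y ≤ (b - a) / 2 * ∑ i, ∑ j, |P i j - x i * y j| :=
  have : Nonempty (Fin m) := ⟨⟨0, hm⟩⟩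
  (sub_le_sub_right (ciSup_le hAP) _).trans (payoff_sub_product_payoff_le hA hP)

lemma epsB_le_of_forall_le_payoff (hn : 0 < n) (hB : ∀ i j, B i j ∈ Set.Icc a b)
    (hP : ∑ i, ∑ j, P i j = (∑ i, x i) * ∑ j, y j)
    (hBP : ∀ l, ∑ i, B i l * x i ≤ ∑ i, ∑ j, B i j * P i j) :
    epsB B x y ≤ (b - a) / 2 * ∑ i, ∑ j, |P i j - x i * y j| :=
  have : Nonempty (Fin n) := ⟨⟨0, hn⟩⟩
  (sub_le_sub_right (ciSup_le hBP) _).trans (payoff_sub_product_payoff_le hB hP)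

theorem stmt10_general (hm : 0 < m) (hn : 0 < n)
    (hA : ∀ i j, A i j ∈ Set.Icc a b) (hB : ∀ i j, B i j ∈ Set.Icc a b)
    (hP : ∑ i, ∑ j, P i j = (∑ i, x i) * ∑ j, y j)
    (hAP : ∀ k, ∑ j, A k j * y j ≤ ∑ i, ∑ j, A i j * P i j)
    (hBP : ∀ l, ∑ i, B i l * x i ≤ ∑ i, ∑ j, B i j * P i j) :
    epsNE A B x y ≤ (b - a) / 2 * ∑ i, ∑ j, |P i j - x i * y j| :=
  max_le (epsA_le_of_forall_le_payoff hm hA hP hAP) (epsB_le_of_forall_le_payoff hn hB hP hBP)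

end Regret

section Feasible

variable {A B : Matrix (Fin m) (Fin n) ℝ} {M : Matrix (SDPIdx m n) (SDPIdx m n) ℝ}

lemma blkZ_eq_blkP (hM : M.IsHermitian) (i : Fin m) (j : Fin n) : blkZ M j i = blkP M i j :=
  hM.apply _ _

lemma SDP1Feasible.sum_mul_lastY_le (h : SDP1Feasible A B M) (k : Fin m) :
    ∑ j, A k j * lastY M j ≤ ∑ i, ∑ j, A i j * blkP M i j := by
  obtain ⟨hpsd, -, -, -, -, hA, -⟩ := h
  simpa only [blkZ_eq_blkP hpsd.isHermitian] using hA k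

lemma SDP1Feasible.sum_mul_lastX_le (h : SDP1Feasible A B M) (l : Fin n) :
    ∑ i, B i l * lastX M i ≤ ∑ i, ∑ j, B i j * blkP M i j := by
  obtain ⟨hpsd, -, -, -, -, -, hB⟩ := h
  simpa only [blkZ_eq_blkP hpsd.isHermitian] using hB l

lemma SDP2Feasible.sum_blkP (h : SDP2Feasible A B M) :
    ∑ i, ∑ j, blkP M i j = (∑ i, lastX M i) * ∑ j, lastY M j := by
  obtain ⟨⟨-, -, -, -, hy, -, -⟩, -, hP, -⟩ := h
  simp only [hP, hy, mul_one]

end Feasible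

/-- `ε(x,y) ≤ (1/2)‖P − xyᵀ‖_1` for any SDP2-feasible solution of a game
with payoffs in `[0,1]`. -/
theorem stmt10 (hm : 0 < m) (hn : 0 < n) (A B : Matrix (Fin m) (Fin n) ℝ)
    (hA : ∀ i j, A i j ∈ Set.Icc (0 : ℝ) 1) (hB : ∀ i j, B i j ∈ Set.Icc (0 : ℝ) 1)
    (M : Matrix (SDPIdx m n) (SDPIdx m n) ℝ)
    (hfeas : SDP2Feasible A B M) :
    epsNE A B (lastX M) (lastY M) ≤
      (1 / 2) * ∑ i, ∑ j, |blkP M i j - lastX M i * lastY M j| := by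
  simpa only [sub_zero] using stmt10_general hm hn hA hB hfeas.sum_blkP
    hfeas.1.sum_mul_lastY_le hfeas.1.sum_mul_lastX_le
end

section
/- Let A, B be m×n real matrices all of whose entries lie in [0,1], and let M' be an SDP2-feasible solution for the game (A,B). Let M denote the upper-left (m+n)×(m+n) block of M' and let λ_max(M) denote the largest eigenvalue of M. Then the vectors x and y from the last column of M' satisfy ε(x,y) ≤ ((m+n)/2) · (Tr(M) − λ_max(M)); that is, (x,y) is an ε-Nash equilibrium with ε at most (m+n)/2 times the sum of all eigenvalues of M except the largest. -/
open Matrix BigOperators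

variable {m n : ℕ}

/-! Let `N = [[X, P], [Z, Y]]` be the upper-left block and `λ` its largest eigenvalue. As `N` is
entrywise nonnegative, `λ` has a nonnegative unit eigenvector `v`, and `R = N - λ v vᵀ` is positive
semidefinite of trace `Tr N - λ`. The `2 × 2` minors of `R` give `|R k l| ≤ √(R k k) √(R l l)`, so
Cauchy-Schwarz bounds the `ℓ¹` norm of the off-diagonal block of `R` by `K = (m+n)/4 · (Tr N - λ)`.
Hence the joint distribution `P` is within `K` of a nonnegative rank one matrix, whose mass is at
most `1` because `R` is positive semidefinite and `X`, `Y` have mass `1`. Comparing marginals, `P`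
is within `4 K` of the product `x yᵀ`. Finally `ε_A` is at most `∑ A i j (P i j - x i y j)`; since
`A` takes values in `[0, 1]` and `P - x yᵀ` has total mass `0`, this is at most half of the `ℓ¹`
norm, i.e. `2 K`. -/

section Matrix

variable {ι : Type*}

theorem abs_apply_le_sqrt_mul_sqrt_of_posSemidef {R : Matrix ι ι ℝ} (hR : R.PosSemidef)
    (k l : ι) : |R k l| ≤ √(R k k) * √(R l l) := by
  have minor_nonneg := (hR.submatrix ![k, l]).det_nonneg
  have symm : R l k = R k l := by simpa using hR.isHermitian.apply k l
  simp only [det_fin_two, submatrix_apply, cons_val_zero, cons_val_one, symm] at minor_nonneg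
  rw [← Real.sqrt_mul hR.diag_nonneg, ← Real.sqrt_sq_eq_abs]
  exact Real.sqrt_le_sqrt (by linarith)

variable [Fintype ι]

theorem sum_sum_apply_nonneg_of_posSemidef {R : Matrix ι ι ℝ} (hR : R.PosSemidef) :
    0 ≤ ∑ i, ∑ j, R i j := by
  simpa [dotProduct, mulVec] using hR.dotProduct_mulVec_nonneg 1

theorem dotProduct_mulVec_le_abs {M : Matrix ι ι ℝ} (hM : ∀ i j, 0 ≤ M i j) (e : ι → ℝ) :
    e ⬝ᵥ M *ᵥ e ≤ |e| ⬝ᵥ M *ᵥ |e| := by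
  simp only [dotProduct, mulVec, Finset.mul_sum]
  refine Finset.sum_le_sum fun i _ ↦ Finset.sum_le_sum fun j _ ↦ ?_
  calc e i * (M i j * e j) ≤ |e i * (M i j * e j)| := le_abs_self _
    _ = |e| i * (M i j * |e| j) := by simp [abs_mul, abs_of_nonneg (hM i j)]

theorem posSemidef_sub_smul_vecMulVec {M : Matrix ι ι ℝ} (hM : M.PosSemidef) {c : ℝ}
    {v : ι → ℝ} (hv : v ⬝ᵥ v = 1) (hMv : M *ᵥ v = c • v) :
    (M - c • vecMulVec v v).PosSemidef := by
  classical
  have hvM : v ᵥ* M = c • v := by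
    rw [← mulVec_transpose, ← conjTranspose_eq_transpose_of_trivial, hM.isHermitian.eq, hMv]
  -- Deflation is compression to the orthogonal complement of `v`.
  have key : M - c • vecMulVec v v = (1 - vecMulVec v v) * M * (1 - vecMulVec v v)ᴴ := by
    simp [sub_mul, mul_sub, vecMulVec_mul, mul_vecMulVec, vecMulVec_mulVec, hvM, hMv, hv,
      smul_vecMulVec, vecMulVec_smul]
  rw [key]
  exact hM.mul_mul_conjTranspose_same _

variable [DecidableEq ι] {M : Matrix ι ι ℝ}

theorem posSemidef_iSup_eigenvalues_smul_one_sub (hM : M.IsHermitian) :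
    ((⨆ i, hM.eigenvalues i) • (1 : Matrix ι ι ℝ) - M).PosSemidef := by
  rw [posSemidef_iff_isHermitian_and_spectrum_nonneg, ← Algebra.algebraMap_eq_smul_one,
    ← spectrum.singleton_sub_eq, hM.spectrum_real_eq_range_eigenvalues]
  constructor
  · rw [Algebra.algebraMap_eq_smul_one]
    exact (isHermitian_one.smul (IsSelfAdjoint.all _)).sub hM
  · rintro _ ⟨_, rfl, _, ⟨i, rfl⟩, rfl⟩
    exact sub_nonneg.mpr (le_ciSup (Set.finite_range hM.eigenvalues).bddAbove i)

theorem mulVec_eq_iSup_eigenvalues_smul (hM : M.IsHermitian) {v : ι → ℝ}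
    (hv : (⨆ i, hM.eigenvalues i) * (v ⬝ᵥ v) ≤ v ⬝ᵥ M *ᵥ v) :
    M *ᵥ v = (⨆ i, hM.eigenvalues i) • v := by
  have hpsd := posSemidef_iSup_eigenvalues_smul_one_sub hM
  have hker : ((⨆ i, hM.eigenvalues i) • (1 : Matrix ι ι ℝ) - M) *ᵥ v = 0 := by
    rw [← hpsd.dotProduct_mulVec_zero_iff]
    refine le_antisymm ?_ (hpsd.dotProduct_mulVec_nonneg v)
    simpa [sub_mulVec, smul_mulVec] using hv
  rw [sub_mulVec, smul_mulVec, one_mulVec, sub_eq_zero] at hker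
  exact hker.symm

theorem exists_nonneg_mulVec_eq_iSup_eigenvalues_smul [Nonempty ι] (hM : M.IsHermitian)
    (hnonneg : ∀ i j, 0 ≤ M i j) :
    ∃ v : ι → ℝ, (∀ i, 0 ≤ v i) ∧ v ⬝ᵥ v = 1 ∧ M *ᵥ v = (⨆ i, hM.eigenvalues i) • v := by
  obtain ⟨k, hk⟩ := exists_eq_ciSup_of_finite (f := hM.eigenvalues)
  set e : ι → ℝ := ⇑(hM.eigenvectorBasis k)
  have he : e ⬝ᵥ e = 1 := by
    have h := real_inner_self_eq_norm_sq (hM.eigenvectorBasis k)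
    rwa [hM.eigenvectorBasis.orthonormal.1 k, one_pow] at h
  have habs : |e| ⬝ᵥ |e| = 1 := by
    rw [← he]
    simp [dotProduct]
  have hquad : e ⬝ᵥ M *ᵥ e = ⨆ i, hM.eigenvalues i := by
    rw [hM.mulVec_eigenvectorBasis, hk, dotProduct_smul, he, smul_eq_mul, mul_one]
  refine ⟨|e|, fun i ↦ abs_nonneg (e i), habs, mulVec_eq_iSup_eigenvalues_smul hM ?_⟩
  rw [habs, mul_one, ← hquad]
  exact dotProduct_mulVec_le_abs hnonneg e

end Matrix

section Blocks

variable {ι κ : Type*} [Fintype ι] [Fintype κ]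

theorem sum_sum_abs_toBlocks₁₂_le {R : Matrix (ι ⊕ κ) (ι ⊕ κ) ℝ} (hR : R.PosSemidef) :
    ∑ i, ∑ j, |R.toBlocks₁₂ i j| ≤
      (Fintype.card ι + Fintype.card κ : ℝ) / 4 * R.trace := by
  let t k := √(R k k)
  have hsq : (∑ k, t k) ^ 2 ≤ (Fintype.card ι + Fintype.card κ : ℝ) * R.trace := by
    have hcs := sq_sum_le_card_mul_sum_sq (s := Finset.univ) (f := t)
    simpa [t, Real.sq_sqrt hR.diag_nonneg, trace] using hcs
  calc ∑ i, ∑ j, |R.toBlocks₁₂ i j|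
      ≤ ∑ i, ∑ j, t (.inl i) * t (.inr j) := by
        gcongr
        exact abs_apply_le_sqrt_mul_sqrt_of_posSemidef hR _ _
    _ = (∑ i, t (.inl i)) * ∑ j, t (.inr j) := (Finset.sum_mul_sum _ _ _ _).symm
    _ ≤ (∑ k, t k) ^ 2 / 4 := by
        rw [Fintype.sum_sum_type]
        linarith [four_mul_le_sq_add (∑ i, t (.inl i)) (∑ j, t (.inr j))]
    _ ≤ (Fintype.card ι + Fintype.card κ : ℝ) / 4 * R.trace := by linarith

theorem mul_sq_sum_le_of_posSemidef_sub {M : Matrix ι ι ℝ} {c : ℝ} {v : ι → ℝ}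
    (h : (M - c • vecMulVec v v).PosSemidef) : c * (∑ i, v i) ^ 2 ≤ ∑ i, ∑ j, M i j := by
  have hsum : ∑ i, ∑ j, (M - c • vecMulVec v v) i j = ∑ i, ∑ j, M i j - c * (∑ i, v i) ^ 2 := by
    simp [vecMulVec_apply, ← Finset.mul_sum, ← Finset.sum_mul, sq]
  linarith [sum_sum_apply_nonneg_of_posSemidef h]

theorem exists_nonneg_sum_sum_abs_toBlocks₁₂_sub_mul_le [DecidableEq ι] [DecidableEq κ]
    [Nonempty (ι ⊕ κ)] {N : Matrix (ι ⊕ κ) (ι ⊕ κ) ℝ} (hN : N.PosSemidef)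
    (hnonneg : ∀ k l, 0 ≤ N k l)
    (hX : ∑ i, ∑ i', N.toBlocks₁₁ i i' ≤ 1) (hY : ∑ j, ∑ j', N.toBlocks₂₂ j j' ≤ 1) :
    ∃ (a : ι → ℝ) (b : κ → ℝ), (∀ i, 0 ≤ a i) ∧ (∀ j, 0 ≤ b j) ∧
      (∑ i, a i) * ∑ j, b j ≤ 1 ∧
      ∑ i, ∑ j, |N.toBlocks₁₂ i j - a i * b j| ≤
        (Fintype.card ι + Fintype.card κ : ℝ) / 4 *
          (N.trace - ⨆ k, hN.isHermitian.eigenvalues k) := by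
  obtain ⟨v, hv, hvv, hNv⟩ := exists_nonneg_mulVec_eq_iSup_eigenvalues_smul hN.isHermitian hnonneg
  have hc : 0 ≤ ⨆ k, hN.isHermitian.eigenvalues k := Real.iSup_nonneg hN.eigenvalues_nonneg
  generalize (⨆ k, hN.isHermitian.eigenvalues k) = c at *
  have hR := posSemidef_sub_smul_vecMulVec hN hvv hNv
  refine ⟨fun i ↦ c * v (.inl i), fun j ↦ v (.inr j), fun i ↦ mul_nonneg hc (hv _),
    fun j ↦ hv _, ?_, ?_⟩
  · have hι : c * (∑ i, v (.inl i)) ^ 2 ≤ 1 :=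
      (mul_sq_sum_le_of_posSemidef_sub (hR.submatrix Sum.inl)).trans hX
    have hκ : c * (∑ j, v (.inr j)) ^ 2 ≤ 1 :=
      (mul_sq_sum_le_of_posSemidef_sub (hR.submatrix Sum.inr)).trans hY
    rw [← Finset.mul_sum]
    nlinarith [mul_nonneg hc (sq_nonneg (∑ i, v (.inl i) - ∑ j, v (.inr j)))]
  · have htrace : (N - c • vecMulVec v v).trace = N.trace - c := by
      rw [trace_sub, trace_smul, trace_vecMulVec, hvv, smul_eq_mul, mul_one]
    simpa [← htrace, toBlocks₁₂, vecMulVec_apply, mul_assoc] using sum_sum_abs_toBlocks₁₂_le hR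

end Blocks

theorem abs_sub_mul_le {p x y a b α β : ℝ} (hy : 0 ≤ y) (ha : 0 ≤ a) (hb : 0 ≤ b) (hβ : 0 ≤ β)
    (hαβ : α * β ≤ 1) :
    |p - x * y| ≤
      |p - a * b| + (1 - α * β) * (a * b) + |x - a * β| * y + a * β * |y - α * b| :=
  calc |p - x * y|
      = |(p - a * b) + (1 - α * β) * (a * b) - (x - a * β) * y - a * β * (y - α * b)| := by
        ring_nf
    _ ≤ |p - a * b| + |(1 - α * β) * (a * b)| + |(x - a * β) * y| + |a * β * (y - α * b)| := by
        refine (abs_sub _ _).trans (add_le_add_left ((abs_sub _ _).trans ?_) _)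
        exact add_le_add_left (abs_add_le _ _) _
    _ = |p - a * b| + (1 - α * β) * (a * b) + |x - a * β| * y + a * β * |y - α * b| := by
        rw [abs_of_nonneg (mul_nonneg (sub_nonneg.mpr hαβ) (mul_nonneg ha hb)), abs_mul,
          abs_of_nonneg hy, abs_mul, abs_of_nonneg (mul_nonneg ha hβ)]

theorem sum_mul_le_half_sum_abs {ι : Type*} {s : Finset ι} {c d : ι → ℝ}
    (hc : ∀ i ∈ s, c i ∈ Set.Icc (0 : ℝ) 1) (hd : ∑ i ∈ s, d i = 0) :
    ∑ i ∈ s, c i * d i ≤ (∑ i ∈ s, |d i|) / 2 := by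
  calc ∑ i ∈ s, c i * d i ≤ ∑ i ∈ s, (|d i| + d i) / 2 := by
        refine Finset.sum_le_sum fun i hi ↦ ?_
        obtain ⟨h0, h1⟩ := hc i hi
        cases abs_cases (d i) <;> nlinarith
    _ = (∑ i ∈ s, |d i|) / 2 := by rw [← Finset.sum_div, Finset.sum_add_distrib, hd, add_zero]

section Marginals

variable {ι κ : Type*} [Fintype ι] [Fintype κ]

theorem sum_marginals_eq {P : Matrix ι κ ℝ} {x : ι → ℝ} {y : κ → ℝ}
    (hx : ∀ i, ∑ j, P i j = x i) (hy : ∀ j, ∑ i, P i j = y j) : ∑ j, y j = ∑ i, x i := by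
  simp only [← hx, ← hy]
  exact Finset.sum_comm

theorem sum_sum_abs_sub_mul_marginals_le {P : Matrix ι κ ℝ} {x : ι → ℝ} {y : κ → ℝ}
    (hP : ∀ i j, 0 ≤ P i j) (hx : ∀ i, ∑ j, P i j = x i) (hy : ∀ j, ∑ i, P i j = y j)
    (hx1 : ∑ i, x i = 1) {a : ι → ℝ} {b : κ → ℝ} (ha : ∀ i, 0 ≤ a i) (hb : ∀ j, 0 ≤ b j)
    (hab : (∑ i, a i) * ∑ j, b j ≤ 1) :
    ∑ i, ∑ j, |P i j - x i * y j| ≤ 4 * ∑ i, ∑ j, |P i j - a i * b j| := by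
  set α := ∑ i, a i with hα
  set β := ∑ j, b j with hβ
  set K := ∑ i, ∑ j, |P i j - a i * b j| with hK
  have hα0 : 0 ≤ α := Finset.sum_nonneg fun i _ ↦ ha i
  have hβ0 : 0 ≤ β := Finset.sum_nonneg fun j _ ↦ hb j
  have hy0 : ∀ j, 0 ≤ y j := fun j ↦ hy j ▸ Finset.sum_nonneg fun i _ ↦ hP i j
  have hy1 : ∑ j, y j = 1 := (sum_marginals_eq hx hy).trans hx1
  have hrow : ∑ i, |x i - a i * β| ≤ K := by
    simp only [← hx, hβ, Finset.mul_sum, ← Finset.sum_sub_distrib]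
    exact Finset.sum_le_sum fun _ _ ↦ Finset.abs_sum_le_sum_abs _ _
  have hcol : ∑ j, |y j - α * b j| ≤ K := by
    simp only [← hy, hα, Finset.sum_mul, ← Finset.sum_sub_distrib]
    rw [hK, Finset.sum_comm]
    exact Finset.sum_le_sum fun _ _ ↦ Finset.abs_sum_le_sum_abs _ _
  have hmass : 1 - α * β ≤ K := by
    calc 1 - α * β = ∑ i, (x i - a i * β) := by
          rw [Finset.sum_sub_distrib, hx1, ← Finset.sum_mul]
      _ ≤ K := (Finset.sum_le_sum fun i _ ↦ le_abs_self _).trans hrow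
  calc ∑ i, ∑ j, |P i j - x i * y j|
      ≤ ∑ i, ∑ j, (|P i j - a i * b j| + (1 - α * β) * (a i * b j) +
          |x i - a i * β| * y j + a i * β * |y j - α * b j|) := by
        gcongr with i _ j _
        exact abs_sub_mul_le (hy0 j) (ha i) (hb j) hβ0 hab
    _ = K + (1 - α * β) * (α * β) + (∑ i, |x i - a i * β|) * 1 +
          α * β * ∑ j, |y j - α * b j| := by
        simp only [Finset.sum_add_distrib, ← Finset.mul_sum, ← Finset.sum_mul, ← hα, ← hβ, ← hK,
          hy1]
    _ ≤ K + K * 1 + K * 1 + 1 * K := by gcongr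
    _ = 4 * K := by ring

theorem nonempty_of_sum_eq_one {f : ι → ℝ} (hf : ∑ i, f i = 1) : Nonempty ι :=
  Finset.univ_nonempty_iff.mp (Finset.nonempty_of_sum_ne_zero (hf ▸ one_ne_zero))

theorem sum_sum_mul_toBlocks₁₂_sub_le [DecidableEq ι] [DecidableEq κ]
    {N : Matrix (ι ⊕ κ) (ι ⊕ κ) ℝ} (hN : N.PosSemidef) (hnonneg : ∀ k l, 0 ≤ N k l)
    (hX : ∑ i, ∑ i', N.toBlocks₁₁ i i' ≤ 1) (hY : ∑ j, ∑ j', N.toBlocks₂₂ j j' ≤ 1)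
    {x : ι → ℝ} {y : κ → ℝ} (hx : ∀ i, ∑ j, N.toBlocks₁₂ i j = x i)
    (hy : ∀ j, ∑ i, N.toBlocks₁₂ i j = y j) (hx1 : ∑ i, x i = 1) {C : Matrix ι κ ℝ}
    (hC : ∀ i j, C i j ∈ Set.Icc (0 : ℝ) 1) :
    ∑ i, ∑ j, C i j * (N.toBlocks₁₂ i j - x i * y j) ≤
      (Fintype.card ι + Fintype.card κ : ℝ) / 2 *
        (N.trace - ⨆ k, hN.isHermitian.eigenvalues k) := by
  have := nonempty_of_sum_eq_one hx1
  obtain ⟨a, b, ha, hb, hab, hclose⟩ :=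
    exists_nonneg_sum_sum_abs_toBlocks₁₂_sub_mul_le hN hnonneg hX hY
  have hl1 := sum_sum_abs_sub_mul_marginals_le (P := N.toBlocks₁₂) (fun i j ↦ hnonneg _ _)
    hx hy hx1 ha hb hab
  have hmass : ∑ p : ι × κ, (N.toBlocks₁₂ p.1 p.2 - x p.1 * y p.2) = 0 := by
    have hy1 : ∑ j, y j = 1 := (sum_marginals_eq hx hy).trans hx1
    simp only [Fintype.sum_prod_type, Finset.sum_sub_distrib, hx, ← Finset.mul_sum, hy1, mul_one,
      sub_self]
  have hhalf := sum_mul_le_half_sum_abs (fun p _ ↦ hC p.1 p.2) hmass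
  simp only [Fintype.sum_prod_type] at hhalf
  linarith

end Marginals

theorem epsA_le_sum_mul_sub [Nonempty (Fin m)] {A P : Matrix (Fin m) (Fin n) ℝ} {x : Fin m → ℝ}
    {y : Fin n → ℝ} (h : ∀ i, ∑ j, A i j * y j ≤ ∑ i', ∑ j, A i' j * P i' j) :
    epsA A x y ≤ ∑ i, ∑ j, A i j * (P i j - x i * y j) :=
  calc epsA A x y ≤ ∑ i, ∑ j, A i j * P i j - ∑ i, ∑ j, x i * A i j * y j :=
        sub_le_sub_right (ciSup_le h) _
    _ = ∑ i, ∑ j, A i j * (P i j - x i * y j) := by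
        simp only [← Finset.sum_sub_distrib, mul_sub, mul_assoc, mul_left_comm]

theorem epsB_le_sum_mul_sub [Nonempty (Fin n)] {B P : Matrix (Fin m) (Fin n) ℝ} {x : Fin m → ℝ}
    {y : Fin n → ℝ} (h : ∀ j, ∑ i, B i j * x i ≤ ∑ i, ∑ j', B i j' * P i j') :
    epsB B x y ≤ ∑ i, ∑ j, B i j * (P i j - x i * y j) :=
  calc epsB B x y ≤ ∑ i, ∑ j, B i j * P i j - ∑ i, ∑ j, x i * B i j * y j :=
        sub_le_sub_right (ciSup_le h) _
    _ = ∑ i, ∑ j, B i j * (P i j - x i * y j) := by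
        simp only [← Finset.sum_sub_distrib, mul_sub, mul_assoc, mul_left_comm]

theorem stmt11_general (A B : Matrix (Fin m) (Fin n) ℝ)
    (hA : ∀ i j, A i j ∈ Set.Icc (0 : ℝ) 1) (hB : ∀ i j, B i j ∈ Set.Icc (0 : ℝ) 1)
    (M : Matrix (SDPIdx m n) (SDPIdx m n) ℝ) (hfeas : SDP1Feasible A B M)
    (hX : ∑ i, ∑ i', blkX M i i' ≤ 1) (hY : ∑ j, ∑ j', blkY M j j' ≤ 1)
    (hP : ∀ i, ∑ j, blkP M i j = lastX M i) (hZ : ∀ j, ∑ i, blkZ M j i = lastY M j)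
    (hH : (upperBlock M).IsHermitian) :
    epsNE A B (lastX M) (lastY M) ≤
      ((m + n : ℝ) / 2) * ((upperBlock M).trace - ⨆ i, hH.eigenvalues i) := by
  obtain ⟨hpsd, hnonneg, -, hx1, hy1, hNashA, hNashB⟩ := hfeas
  have := nonempty_of_sum_eq_one hx1
  have := nonempty_of_sum_eq_one hy1
  have hZP : ∀ i j, blkZ M j i = blkP M i j := fun i j ↦
    hpsd.isHermitian.apply (.inl (.inl i)) (.inl (.inr j))
  simp only [hZP] at hZ hNashA hNashB
  have hbound {C : Matrix (Fin m) (Fin n) ℝ} (hC : ∀ i j, C i j ∈ Set.Icc (0 : ℝ) 1) :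
      ∑ i, ∑ j, C i j * (blkP M i j - lastX M i * lastY M j) ≤
        ((m + n : ℝ) / 2) * ((upperBlock M).trace - ⨆ i, hH.eigenvalues i) := by
    simpa only [Fintype.card_fin] using! sum_sum_mul_toBlocks₁₂_sub_le (N := upperBlock M)
      (hpsd.submatrix Sum.inl) (fun _ _ ↦ hnonneg _ _) hX hY hP hZ hx1 hC
  exact max_le ((epsA_le_sum_mul_sub hNashA).trans (hbound hA))
    ((epsB_le_sum_mul_sub hNashB).trans (hbound hB))

/-- `ε(x,y) ≤ ((m+n)/2)·(Tr(M) − λ_max(M))`, i.e. `(m+n)/2` times the sum of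
all eigenvalues of the upper-left block except the largest. -/
theorem stmt11 (hm : 0 < m) (hn : 0 < n) (A B : Matrix (Fin m) (Fin n) ℝ)
    (hA : ∀ i j, A i j ∈ Set.Icc (0 : ℝ) 1) (hB : ∀ i j, B i j ∈ Set.Icc (0 : ℝ) 1)
    (M : Matrix (SDPIdx m n) (SDPIdx m n) ℝ)
    (hfeas : SDP2Feasible A B M)
    (hH : (upperBlock M).IsHermitian) :
    epsNE A B (lastX M) (lastY M) ≤
      ((m + n : ℝ) / 2) * ((upperBlock M).trace - ⨆ i, hH.eigenvalues i) := by
  obtain ⟨hfeas₁, hX, hP, hY, hZ, -, -⟩ := hfeas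
  exact stmt11_general A B hA hB M hfeas₁ (by simp only [hX, hfeas₁.2.2.2.1, le_refl])
    (by simp only [hY, hfeas₁.2.2.2.2.1, le_refl]) hP hZ hH
end

section
/- Let A, B be m×n real matrices and let M' be an SDP2-feasible solution for the game (A,B) whose upper-left (m+n)×(m+n) block M has rank 2. Then there exist σ_1, σ_2 ≥ 0 with σ_1 + σ_2 = 1, vectors a, c ∈ Δ_m, and vectors b, d ∈ Δ_n such that M = σ_1 (a,b)(a,b)^T + σ_2 (c,d)(c,d)^T, where (a,b) ∈ ℝ^{m+n} denotes the concatenation of a and b. -/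
open Matrix BigOperators

variable {m n : ℕ}

/-!
Let `e` and `f` be the indicator vectors of the two players' strategies and `N` the upper-left
block. The row constraints say that `N e = N f = z` with `e ⬝ z = f ⬝ z = 1`, so `N - z zᵀ` is
positive semidefinite of rank one less than `N`; hence `N = z zᵀ + w wᵀ`, and evaluating `N` at `e`
and `f` shows that `w` is orthogonal to both. The points `(z i, w i)` of the plane have pairwise
nonnegative inner products, so they all lie in a rotated quadrant, bounded on one side by the line
of largest slope `α = max (w i / z i)`. Rotating that quadrant to the standard one turns `z, w` into
nonnegative multiples of `z + α w` and `z - α⁻¹ w`. Since `w` is orthogonal to `e` and `f`, these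
two vectors have the same block sums as `z`, namely `1`.
-/

section Field

variable {ι κ K : Type*} [Fintype κ] [Field K]

lemma eq_zero_of_rank_eq_zero {A : Matrix ι κ K} (h : A.rank = 0) : A = 0 := by
  classical
  have h_zero : A.mulVecLin = 0 := LinearMap.range_eq_bot.mp (Submodule.finrank_eq_zero.mp h)
  rwa [← toLin'_apply', LinearEquiv.map_eq_zero_iff] at h_zero

-- Wedderburn rank reduction: `u` annihilates the range of the new matrix but not `A *ᵥ v`.
lemma rank_sub_vecMulVec_lt [Fintype ι] (A : Matrix ι κ K) {u : ι → K} {v : κ → K}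
    (h : u ⬝ᵥ A *ᵥ v = 1) : (A - vecMulVec (A *ᵥ v) (u ᵥ* A)).rank < A.rank := by
  have h_mulVec (y : κ → K) :
      (A - vecMulVec (A *ᵥ v) (u ᵥ* A)) *ᵥ y = A *ᵥ (y - (u ⬝ᵥ A *ᵥ y) • v) := by
    rw [sub_mulVec, vecMulVec_mulVec, ← dotProduct_mulVec, op_smul_eq_smul, mulVec_sub,
      mulVec_smul]
  have h_orth (y : κ → K) : u ⬝ᵥ (A - vecMulVec (A *ᵥ v) (u ᵥ* A)) *ᵥ y = 0 := by
    rw [h_mulVec, mulVec_sub, mulVec_smul, dotProduct_sub, dotProduct_smul, h, smul_eq_mul,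
      mul_one, sub_self]
  apply Submodule.finrank_lt_finrank_of_lt
  rw [SetLike.lt_iff_le_and_exists]
  refine ⟨?_, A *ᵥ v, LinearMap.mem_range_self A.mulVecLin v, ?_⟩
  · rintro _ ⟨y, rfl⟩
    exact ⟨_, (h_mulVec y).symm⟩
  · rintro ⟨y, hy⟩
    have h_one : u ⬝ᵥ (A - vecMulVec (A *ᵥ v) (u ᵥ* A)) *ᵥ y = 1 :=
      (congrArg (u ⬝ᵥ ·) hy).trans h
    exact zero_ne_one ((h_orth y).symm.trans h_one)

end Field

section PosSemidef

variable {ι : Type*} [Fintype ι]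

lemma star_mulVec_of_isHermitian {R : Type*} [NonUnitalSemiring R] [StarRing R]
    {N : Matrix ι ι R} (hN : N.IsHermitian) (e : ι → R) : star (N *ᵥ e) = star e ᵥ* N := by
  rw [star_mulVec, hN.eq]

lemma posSemidef_sub_vecMulVec_star {R : Type*} [CommRing R] [PartialOrder R] [StarRing R]
    {N : Matrix ι ι R} (hN : N.PosSemidef) {e : ι → R} (he : star e ⬝ᵥ N *ᵥ e = 1) :
    (N - vecMulVec (N *ᵥ e) (star (N *ᵥ e))).PosSemidef := by
  classical
  set P : Matrix ι ι R := 1 - vecMulVec e (star (N *ᵥ e)) with hP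
  have h_mul : N * P = N - vecMulVec (N *ᵥ e) (star (N *ᵥ e)) := by
    rw [hP, mul_sub, mul_one, mul_vecMulVec]
  have h_orth : star e ᵥ* (N * P) = 0 := by
    rw [h_mul, vecMul_sub, vecMul_vecMulVec, he, one_smul,
      star_mulVec_of_isHermitian hN.isHermitian, sub_self]
  have h_adj : Pᴴ = 1 - vecMulVec (N *ᵥ e) (star e) := by
    rw [hP, conjTranspose_sub, conjTranspose_one, conjTranspose_vecMulVec, star_star]
  have h_conj : Pᴴ * N * P = N - vecMulVec (N *ᵥ e) (star (N *ᵥ e)) := by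
    rw [mul_assoc, h_adj, sub_mul, one_mul, vecMulVec_mul, h_orth, vecMulVec_zero, sub_zero,
      h_mul]
  exact h_conj ▸ hN.conjTranspose_mul_mul_same P

variable {𝕜 : Type*} [RCLike 𝕜] {N : Matrix ι ι 𝕜}

open scoped ComplexOrder

lemma exists_star_dotProduct_mulVec_eq_one (hN : N.PosSemidef) (h : N ≠ 0) :
    ∃ e, star e ⬝ᵥ N *ᵥ e = 1 := by
  obtain ⟨x, hx⟩ : ∃ x, N *ᵥ x ≠ 0 := by
    contrapose! h
    exact mulVec_injective (funext fun x ↦ by rw [h, zero_mulVec])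
  have h_pos : 0 < star x ⬝ᵥ N *ᵥ x :=
    (hN.dotProduct_mulVec_nonneg x).lt_of_ne' ((hN.dotProduct_mulVec_zero_iff x).not.mpr hx)
  obtain ⟨r, hr, hrx⟩ := RCLike.pos_iff_exists_ofReal.mp h_pos
  have h_scale : (√r)⁻¹ * ((√r)⁻¹ * r) = 1 := by
    rw [← mul_assoc, ← mul_inv, Real.mul_self_sqrt hr.le, inv_mul_cancel₀ hr.ne']
  refine ⟨((√r)⁻¹ : ℝ) • x, ?_⟩
  rw [star_smul, star_trivial, mulVec_smul, smul_dotProduct, dotProduct_smul, ← hrx,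
    RCLike.real_smul_eq_coe_mul, RCLike.real_smul_eq_coe_mul]
  exact_mod_cast h_scale

lemma exists_eq_vecMulVec_star (hN : N.PosSemidef) (hrank : N.rank ≤ 1) :
    ∃ w, N = vecMulVec w (star w) := by
  by_cases h : N = 0
  · exact ⟨0, by rw [h, zero_vecMulVec]⟩
  obtain ⟨e, he⟩ := exists_star_dotProduct_mulVec_eq_one hN h
  have h_lt := rank_sub_vecMulVec_lt N he
  rw [← star_mulVec_of_isHermitian hN.isHermitian] at h_lt
  exact ⟨N *ᵥ e, sub_eq_zero.mp (eq_zero_of_rank_eq_zero (by lia))⟩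

lemma exists_eq_vecMulVec_star_add_vecMulVec_star (hN : N.PosSemidef) (hrank : N.rank ≤ 2)
    {e : ι → 𝕜} (he : star e ⬝ᵥ N *ᵥ e = 1) :
    ∃ w, N = vecMulVec (N *ᵥ e) (star (N *ᵥ e)) + vecMulVec w (star w) := by
  have h_lt := rank_sub_vecMulVec_lt N he
  rw [← star_mulVec_of_isHermitian hN.isHermitian] at h_lt
  obtain ⟨w, hw⟩ := exists_eq_vecMulVec_star (posSemidef_sub_vecMulVec_star hN he) (by lia)
  exact ⟨w, sub_eq_iff_eq_add'.mp hw⟩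

end PosSemidef

section Quadrant

variable {ι K : Type*} [Field K] [LinearOrder K] [IsStrictOrderedRing K] {z w : ι → K}

-- Each pair `(z i, w i)` is rotated by the angle `θ = arctan α`, up to the scalings that give the
-- weights `cos² θ` and `sin² θ`.
lemma vecMulVec_add_vecMulVec_eq_rotation (z w : ι → K) {α : K} (hα : α ≠ 0) :
    vecMulVec z z + vecMulVec w w =
      (1 / (1 + α ^ 2)) • vecMulVec (z + α • w) (z + α • w) +
        (α ^ 2 / (1 + α ^ 2)) • vecMulVec (z - α⁻¹ • w) (z - α⁻¹ • w) := by
  have h_ne : 1 + α ^ 2 ≠ 0 := by positivity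
  ext i j
  simp only [Matrix.add_apply, Matrix.smul_apply, vecMulVec_apply, Pi.add_apply, Pi.sub_apply,
    Pi.smul_apply, smul_eq_mul]
  field_simp
  ring

lemma exists_max_slope [Finite ι] (hz : 0 ≤ z) (hzw : ∀ i, z i = 0 → w i = 0) (hw : ∃ i, 0 < w i) :
    ∃ α : K, 0 < α ∧ w ≤ α • z ∧ ∃ i, 0 < z i ∧ w i = α * z i := by
  obtain ⟨k, hk⟩ := hw
  have hz_pos {i : ι} (hi : w i ≠ 0) : 0 < z i := (hz i).lt_of_ne' (mt (hzw i) hi)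
  have : Nonempty ι := ⟨k⟩
  obtain ⟨i₀, h_max⟩ := Finite.exists_max fun i ↦ w i / z i
  have hα : 0 < w i₀ / z i₀ := (div_pos hk (hz_pos hk.ne')).trans_le (h_max k)
  have hz₀ : 0 < z i₀ := hz_pos (div_ne_zero_iff.mp hα.ne').1
  refine ⟨w i₀ / z i₀, hα, fun i ↦ ?_, i₀, hz₀, (div_mul_cancel₀ _ hz₀.ne').symm⟩
  rcases eq_or_ne (w i) 0 with hi | hi
  · rw [hi]
    exact mul_nonneg hα.le (hz i)
  · exact (div_le_iff₀ (hz_pos hi)).mp (h_max i)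

variable [Fintype ι]

lemma eq_zero_of_sum_eq_zero_of_mul_add_mul_nonneg (hw : ∑ i, w i = 0)
    (hzw : ∀ i j, 0 ≤ z i * z j + w i * w j) {i : ι} (hi : z i = 0) : w i = 0 := by
  have h_nonneg (j : ι) : 0 ≤ w i * w j := by simpa only [hi, zero_mul, zero_add] using hzw i j
  have h_sum : ∑ j, w i * w j = 0 := by rw [← Finset.mul_sum, hw, mul_zero]
  exact mul_self_eq_zero.mp
    ((Finset.sum_eq_zero_iff_of_nonneg fun j _ ↦ h_nonneg j).mp h_sum i (Finset.mem_univ i))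

lemma exists_add_smul_nonneg_and_sub_inv_smul_nonneg (hz : 0 ≤ z) (hw : ∑ i, w i = 0)
    (hzw : ∀ i j, 0 ≤ z i * z j + w i * w j) :
    ∃ α : K, 0 < α ∧ 0 ≤ z + α • w ∧ 0 ≤ z - α⁻¹ • w := by
  by_cases hw₀ : w = 0
  · exact ⟨1, one_pos, by simpa [hw₀] using hz⟩
  obtain ⟨k, hk⟩ := Function.ne_iff.mp hw₀
  obtain ⟨l, -, hl⟩ :=
    Finset.exists_pos_of_sum_zero_of_exists_nonzero w hw ⟨k, Finset.mem_univ k, hk⟩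
  obtain ⟨α, hα, h_le, i₀, hz₀, hw_eq⟩ :=
    exists_max_slope hz (fun _ hi ↦ eq_zero_of_sum_eq_zero_of_mul_add_mul_nonneg hw hzw hi)
      ⟨l, hl⟩
  refine ⟨α, hα, fun i ↦ ?_, sub_nonneg.mpr ((inv_smul_le_iff_of_pos hα).mpr h_le)⟩
  have h_mul : 0 ≤ z i₀ * (z i + α * w i) := by
    calc
      0 ≤ z i₀ * z i + w i₀ * w i := hzw i₀ i
      _ = z i₀ * (z i + α * w i) := by rw [hw_eq]; ring
  exact nonneg_of_mul_nonneg_right h_mul hz₀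

end Quadrant

section DoublyNonnegative

variable {ι : Type*} [Fintype ι]

lemma dotProduct_eq_zero_of_add_mulVec_eq {R : Type*} [CommRing R] [NoZeroDivisors R]
    {z w u : ι → R} (h : (vecMulVec z z + vecMulVec w w) *ᵥ u = z) (hu : u ⬝ᵥ z = 1) :
    u ⬝ᵥ w = 0 := by
  have h_smul : (u ⬝ᵥ w) • w = 0 := by
    simpa [add_mulVec, vecMulVec_mulVec, dotProduct_comm _ u, hu] using h
  have h_sq : (u ⬝ᵥ w) * (u ⬝ᵥ w) = 0 := by
    rw [← smul_eq_mul, ← dotProduct_smul, h_smul, dotProduct_zero]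
  exact mul_self_eq_zero.mp h_sq

lemma dotProduct_mulVec_comm_of_isSymm {R : Type*} [CommSemiring R] {N : Matrix ι ι R}
    (hN : N.IsSymm) (u v : ι → R) : u ⬝ᵥ N *ᵥ v = v ⬝ᵥ N *ᵥ u := by
  rw [dotProduct_mulVec, ← mulVec_transpose, hN.eq, dotProduct_comm]

variable {N : Matrix ι ι ℝ} {e f : ι → ℝ}

lemma exists_eq_vecMulVec_add_vecMulVec_of_mulVec_eq (hN : N.PosSemidef) (hrank : N.rank ≤ 2)
    (hrow : N *ᵥ e = N *ᵥ f) (he : e ⬝ᵥ N *ᵥ e = 1) (hf : f ⬝ᵥ N *ᵥ e = 1) :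
    ∃ w, N = vecMulVec (N *ᵥ e) (N *ᵥ e) + vecMulVec w w ∧ e ⬝ᵥ w = 0 ∧ f ⬝ᵥ w = 0 := by
  obtain ⟨w, hw⟩ : ∃ w, N = vecMulVec (N *ᵥ e) (N *ᵥ e) + vecMulVec w w := by
    simpa only [star_trivial] using
      exists_eq_vecMulVec_star_add_vecMulVec_star hN hrank (e := e) (by rwa [star_trivial])
  refine ⟨w, hw, ?_, ?_⟩
  · exact dotProduct_eq_zero_of_add_mulVec_eq (congrArg (· *ᵥ e) hw).symm he
  · exact dotProduct_eq_zero_of_add_mulVec_eq ((congrArg (· *ᵥ f) hw).symm.trans hrow.symm) hf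

lemma exists_nonneg_eq_add_vecMulVec (hN : N.PosSemidef) (hN_nonneg : ∀ i j, 0 ≤ N i j)
    (hrank : N.rank ≤ 2) (hef : e + f = 1) (hrow : N *ᵥ e = N *ᵥ f)
    (he : e ⬝ᵥ N *ᵥ e = 1) :
    ∃ (σ₁ σ₂ : ℝ) (p q : ι → ℝ), 0 ≤ σ₁ ∧ 0 ≤ σ₂ ∧ σ₁ + σ₂ = 1 ∧
      (0 ≤ p ∧ e ⬝ᵥ p = 1 ∧ f ⬝ᵥ p = 1) ∧ (0 ≤ q ∧ e ⬝ᵥ q = 1 ∧ f ⬝ᵥ q = 1) ∧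
      N = σ₁ • vecMulVec p p + σ₂ • vecMulVec q q := by
  have hf : f ⬝ᵥ N *ᵥ e = 1 := by
    rw [dotProduct_mulVec_comm_of_isSymm (isHermitian_iff_isSymm.mp hN.isHermitian), ← hrow, he]
  obtain ⟨w, hw, hew, hfw⟩ :=
    exists_eq_vecMulVec_add_vecMulVec_of_mulVec_eq hN hrank hrow he hf
  have hz_nonneg : 0 ≤ N *ᵥ e := fun i ↦ by
    have h_one : 0 ≤ (N *ᵥ 1) i := dotProduct_nonneg_of_nonneg (hN_nonneg i) zero_le_one
    rw [← hef, mulVec_add, ← hrow, Pi.add_apply] at h_one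
    exact nonneg_add_self_iff.mp h_one
  have hw_sum : ∑ i, w i = 0 := by
    rw [← one_dotProduct, ← hef, add_dotProduct, hew, hfw, add_zero]
  have hzw (i j : ι) : 0 ≤ (N *ᵥ e) i * (N *ᵥ e) j + w i * w j := by
    rw [← vecMulVec_apply, ← vecMulVec_apply, ← Matrix.add_apply, ← hw]
    exact hN_nonneg i j
  obtain ⟨α, hα, hp, hq⟩ :=
    exists_add_smul_nonneg_and_sub_inv_smul_nonneg hz_nonneg hw_sum hzw
  refine ⟨1 / (1 + α ^ 2), α ^ 2 / (1 + α ^ 2), N *ᵥ e + α • w, N *ᵥ e - α⁻¹ • w, by positivity,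
    by positivity, by field_simp, ⟨hp, ?_, ?_⟩, ⟨hq, ?_, ?_⟩,
    hw.trans (vecMulVec_add_vecMulVec_eq_rotation (N *ᵥ e) w hα.ne')⟩
  all_goals simp [he, hf, hew, hfw]

end DoublyNonnegative

section Simplex

variable {ι κ : Type*} [Fintype ι] [Fintype κ] {p : ι ⊕ κ → ℝ}

lemma comp_inl_mem_stdSimplex (hp : 0 ≤ p) (h : Sum.elim 1 0 ⬝ᵥ p = 1) :
    p ∘ Sum.inl ∈ stdSimplex ℝ ι :=
  ⟨fun i ↦ hp (Sum.inl i), by simpa [dotProduct] using h⟩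

lemma comp_inr_mem_stdSimplex (hp : 0 ≤ p) (h : Sum.elim 0 1 ⬝ᵥ p = 1) :
    p ∘ Sum.inr ∈ stdSimplex ℝ κ :=
  ⟨fun i ↦ hp (Sum.inr i), by simpa [dotProduct] using h⟩

end Simplex

theorem stmt12_general {ι κ : Type*} [Fintype ι] [Fintype κ] {N : Matrix (ι ⊕ κ) (ι ⊕ κ) ℝ}
    (hN : N.PosSemidef) (hN_nonneg : ∀ k l, 0 ≤ N k l) (hrank : N.rank ≤ 2)
    (hrow : N *ᵥ Sum.elim 1 0 = N *ᵥ Sum.elim 0 1)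
    (hsum : Sum.elim 1 0 ⬝ᵥ N *ᵥ Sum.elim 1 0 = 1) :
    ∃ (σ₁ σ₂ : ℝ) (a c : ι → ℝ) (b d : κ → ℝ),
      0 ≤ σ₁ ∧ 0 ≤ σ₂ ∧ σ₁ + σ₂ = 1 ∧
      a ∈ stdSimplex ℝ ι ∧ c ∈ stdSimplex ℝ ι ∧ b ∈ stdSimplex ℝ κ ∧ d ∈ stdSimplex ℝ κ ∧
      N = σ₁ • vecMulVec (Sum.elim a b) (Sum.elim a b) +
        σ₂ • vecMulVec (Sum.elim c d) (Sum.elim c d) := by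
  obtain ⟨σ₁, σ₂, p, q, hσ₁, hσ₂, hσ, ⟨hp, hp₁, hp₂⟩, ⟨hq, hq₁, hq₂⟩, h⟩ :=
    exists_nonneg_eq_add_vecMulVec hN hN_nonneg hrank (by ext (i | j) <;> simp) hrow hsum
  refine ⟨σ₁, σ₂, p ∘ Sum.inl, q ∘ Sum.inl, p ∘ Sum.inr, q ∘ Sum.inr, hσ₁, hσ₂, hσ,
    comp_inl_mem_stdSimplex hp hp₁, comp_inl_mem_stdSimplex hq hq₁,
    comp_inr_mem_stdSimplex hp hp₂, comp_inr_mem_stdSimplex hq hq₂, ?_⟩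
  rw [Sum.elim_comp_inl_inr, Sum.elim_comp_inl_inr, h]

namespace SDP2Feasible

variable {A B : Matrix (Fin m) (Fin n) ℝ} {M : Matrix (SDPIdx m n) (SDPIdx m n) ℝ}

lemma posSemidef_upperBlock (h : SDP2Feasible A B M) : (upperBlock M).PosSemidef :=
  h.1.1.submatrix Sum.inl

lemma upperBlock_nonneg (h : SDP2Feasible A B M) (k l : Fin m ⊕ Fin n) : 0 ≤ upperBlock M k l :=
  h.1.2.1 _ _

lemma upperBlock_mulVec_elim_one_zero (h : SDP2Feasible A B M) :
    upperBlock M *ᵥ Sum.elim 1 0 = Sum.elim (lastX M) (lastY M) := by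
  obtain ⟨-, hX, -, -, hZ, -, -⟩ := h
  ext (i | j)
  · simpa [mulVec, dotProduct, upperBlock, blkX] using hX i
  · simpa [mulVec, dotProduct, upperBlock, blkZ] using hZ j

lemma upperBlock_mulVec_elim_zero_one (h : SDP2Feasible A B M) :
    upperBlock M *ᵥ Sum.elim 0 1 = Sum.elim (lastX M) (lastY M) := by
  obtain ⟨-, -, hP, hY, -, -, -⟩ := h
  ext (i | j)
  · simpa [mulVec, dotProduct, upperBlock, blkP] using hP i
  · simpa [mulVec, dotProduct, upperBlock, blkY] using hY j

lemma elim_one_zero_dotProduct_upperBlock_mulVec (h : SDP2Feasible A B M) :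
    Sum.elim 1 0 ⬝ᵥ upperBlock M *ᵥ Sum.elim 1 0 = 1 := by
  rw [h.upperBlock_mulVec_elim_one_zero, sumElim_dotProduct_sumElim, one_dotProduct,
    zero_dotProduct, add_zero]
  exact h.1.2.2.2.1

end SDP2Feasible

/-- a rank-2 SDP2-feasible solution admits a completely positive decomposition
into two simplex-vector pairs. -/
theorem stmt12 (A B : Matrix (Fin m) (Fin n) ℝ)
    (M : Matrix (SDPIdx m n) (SDPIdx m n) ℝ)
    (hfeas : SDP2Feasible A B M)
    (hrank : (upperBlock M).rank = 2) :
    ∃ (σ₁ σ₂ : ℝ) (a c : Fin m → ℝ) (b d : Fin n → ℝ),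
      0 ≤ σ₁ ∧ 0 ≤ σ₂ ∧ σ₁ + σ₂ = 1 ∧
      InSimplex a ∧ InSimplex c ∧ InSimplex b ∧ InSimplex d ∧
      upperBlock M =
        σ₁ • Matrix.vecMulVec (Sum.elim a b) (Sum.elim a b) +
        σ₂ • Matrix.vecMulVec (Sum.elim c d) (Sum.elim c d) := by
  exact stmt12_general hfeas.posSemidef_upperBlock hfeas.upperBlock_nonneg hrank.le
    (hfeas.upperBlock_mulVec_elim_one_zero.trans hfeas.upperBlock_mulVec_elim_zero_one.symm)
    hfeas.elim_one_zero_dotProduct_upperBlock_mulVec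
end
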